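/- arXiv:1911.11016 — 2 statements merged into one kernel-verified Lean document; each statement's English description precedes it below -/
import Mathlib

section
/- For every t > 0, the series Σ_{r odd} (1/r)·e^{−2t·cos(π/(2r))}·sin(π/(2r)), taken over all odd positive integers r, converges absolutely (its r-th term is bounded above by π/(2r²)), and the upper limit of the sequence n ↦ |tC_n^eucl|_Rips satisfies limsup_{n→∞} |tC_n^eucl|_Rips = e^{−2t} + 2πt·Σ_{r odd} (1/r)·e^{−2t·cos(π/(2r))}·sin(π/(2r)). -/
open scoped BigOperators Real

/-- The Rips magnitude function of a finite subset `A` of a metric space: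
`|tA|_Rips = Σ_{∅ ≠ B ⊆ A} (−1)^{#B−1} e^{−diam(B)·t}`. -/
noncomputable def ripsMag {Y : Type*} [MetricSpace Y] (A : Finset Y) (t : ℝ) : ℝ :=
  ∑ B ∈ A.powerset.filter (fun B => B.Nonempty),
    (-1 : ℝ) ^ (B.card - 1) * Real.exp (-(Metric.diam (B : Set Y)) * t)


/-- The Euclidean cycle `C_n^eucl`: `n` equally spaced points on the unit circle
in `ℝ² = ℂ`, with the Euclidean metric. -/
noncomputable def euclCycle (n : ℕ) : Finset ℂ :=
  (Finset.range n).image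
    (fun k : ℕ => Complex.exp (2 * (π : ℂ) * (k : ℂ) / (n : ℂ) * Complex.I))

/-- The `r`-th term `(1/r) e^{−2t cos(π/(2r))} sin(π/(2r))` of the limsup series. -/
noncomputable def euclSeriesTerm (t : ℝ) (r : ℕ) : ℝ :=
  (1 / (r : ℝ)) * Real.exp (-2 * t * Real.cos (π / (2 * (r : ℝ)))) *
    Real.sin (π / (2 * (r : ℝ)))

open Classical in
/-- The `G`-chains in `V` with smallest element `v` and largest element `w`. -/
noncomputable def chainsBetween (V : Finset ℕ) (G : ℕ → ℕ → Prop) (v w : ℕ) :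
    Finset (Finset ℕ) :=
  V.powerset.filter fun A =>
    v ∈ A ∧ w ∈ A ∧ A ⊆ Finset.Icc v w ∧ ∀ x ∈ A, ∀ y ∈ A, x < y → G x y

/-- The signed number of `G`-chains in `V` from `v` to `w`. -/
noncomputable def chainSum (V : Finset ℕ) (G : ℕ → ℕ → Prop) (v w : ℕ) : ℤ :=
  ∑ A ∈ chainsBetween V G v w, (-1) ^ (A.card + 1)

theorem mem_chainsBetween {V : Finset ℕ} {G : ℕ → ℕ → Prop} {v w : ℕ} {A : Finset ℕ} :
    A ∈ chainsBetween V G v w ↔ A ⊆ V ∧ v ∈ A ∧ w ∈ A ∧ (∀ x ∈ A, v ≤ x ∧ x ≤ w) ∧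
      ∀ x ∈ A, ∀ y ∈ A, x < y → G x y := by
  simp [chainsBetween, Finset.subset_iff]

theorem chainSum_self {V : Finset ℕ} {G : ℕ → ℕ → Prop} {v : ℕ} (hv : v ∈ V) :
    chainSum V G v v = 1 := by
  have : chainsBetween V G v v = {{v}} := by
    ext A
    rw [mem_chainsBetween, Finset.mem_singleton]
    constructor
    · rintro ⟨-, h, -, hA, -⟩
      ext x
      rw [Finset.mem_singleton]
      exact ⟨fun hx => le_antisymm (hA x hx).2 (hA x hx).1, fun hx => hx ▸ h⟩
    · rintro rfl
      simp [hv]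
  simp [chainSum, this]

open Classical in
theorem chainSum_eq_neg_sum {V : Finset ℕ} {G : ℕ → ℕ → Prop}
    (hG : ∀ x y z, x < y → y < z → G x y → G y z → G x z) {v w : ℕ} (hv : v ∈ V) (hvw : v < w) :
    chainSum V G v w =
      -∑ u ∈ V.filter (fun u => v < u ∧ u ≤ w ∧ G v u), chainSum V G u w := by
  unfold chainSum
  rw [← Finset.sum_neg_distrib]
  simp_rw [← Finset.sum_neg_distrib]
  rw [Finset.sum_sigma']
  symm
  refine Finset.sum_bij (fun p _ => insert v p.2) ?_ ?_ ?_ ?_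
  · rintro ⟨u, A⟩ h
    simp only [Finset.mem_sigma, Finset.mem_filter, mem_chainsBetween] at h
    obtain ⟨⟨huV, hvu, huw, hvuG⟩, hAV, huA, hwA, hA, hAG⟩ := h
    rw [mem_chainsBetween]
    refine ⟨Finset.insert_subset hv hAV, by simp, by simp [hwA], ?_, ?_⟩
    · intro x hx
      rcases Finset.mem_insert.1 hx with rfl | hx
      · exact ⟨le_rfl, hvw.le⟩
      · exact ⟨hvu.le.trans (hA x hx).1, (hA x hx).2⟩
    · intro x hx y hy hxy
      rcases Finset.mem_insert.1 hx with rfl | hx' <;>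
        rcases Finset.mem_insert.1 hy with rfl | hy'
      · omega
      · rcases (hA y hy').1.eq_or_lt with rfl | h
        · exact hvuG
        · exact hG _ _ _ hvu h hvuG (hAG _ huA _ hy' h)
      · have := (hA x hx').1
        omega
      · exact hAG x hx' y hy' hxy
  · rintro ⟨u, A⟩ h ⟨u', A'⟩ h' heq
    simp only [Finset.mem_sigma, Finset.mem_filter, mem_chainsBetween] at h h'
    obtain ⟨⟨huV, hvu, huw, hvuG⟩, hAV, huA, hwA, hA, hAG⟩ := h
    obtain ⟨⟨huV', hvu', huw', hvuG'⟩, hAV', huA', hwA', hA', hAG'⟩ := h'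
    have h1 : v ∉ A := fun h => by have := (hA v h).1; omega
    have h2 : v ∉ A' := fun h => by have := (hA' v h).1; omega
    have hAA : A = A' := by
      have := congrArg (fun S => S.erase v) heq
      simpa [Finset.erase_insert h1, Finset.erase_insert h2] using this
    subst hAA
    have : u = u' := le_antisymm (hA _ huA').1 (hA' _ huA).1
    subst this
    rfl
  · intro A h
    rw [mem_chainsBetween] at h
    obtain ⟨hAV, hvA, hwA, hA, hAG⟩ := h
    have hne : (A.erase v).Nonempty := ⟨w, by simp [hwA, hvw.ne']⟩
    have hmem := Finset.min'_mem _ hne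
    have hm := Finset.mem_erase.1 hmem
    have hlt : v < (A.erase v).min' hne := lt_of_le_of_ne (hA _ hm.2).1 hm.1.symm
    refine ⟨⟨(A.erase v).min' hne, A.erase v⟩, ?_, Finset.insert_erase hvA⟩
    simp only [Finset.mem_sigma, Finset.mem_filter, mem_chainsBetween]
    refine ⟨⟨hAV hm.2, hlt, (hA _ hm.2).2, hAG _ hvA _ hm.2 hlt⟩,
      (Finset.erase_subset _ _).trans hAV, hmem, by simp [hwA, hvw.ne'], ?_, ?_⟩
    · intro x hx
      exact ⟨Finset.min'_le _ _ hx, (hA x (Finset.mem_erase.1 hx).2).2⟩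
    · intro x hx y hy
      exact hAG x (Finset.mem_erase.1 hx).2 y (Finset.mem_erase.1 hy).2
  · rintro ⟨u, A⟩ h
    simp only [Finset.mem_sigma, Finset.mem_filter, mem_chainsBetween] at h
    obtain ⟨⟨huV, hvu, huw, hvuG⟩, hAV, huA, hwA, hA, hAG⟩ := h
    have h1 : v ∉ A := fun h => by have := (hA v h).1; omega
    simp only [Finset.card_insert_of_notMem h1]
    ring

/-- `(-1) ^ d` if `s` is a nonnegative integer of the form `(2 * i + d) * m`, and `0` otherwise. -/
def stepSign (m : ℕ) (s : ℤ) (d : ℕ) : ℤ :=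
  if 0 ≤ s ∧ (2 * m : ℤ) ∣ s - d * m then (-1) ^ d else 0

theorem stepSign_of_neg {m : ℕ} {s : ℤ} {d : ℕ} (hs : s < 0) : stepSign m s d = 0 := by
  simp [stepSign, hs.not_ge]

theorem stepSign_one_of_lt {m : ℕ} {s : ℤ} (hs : s < m) : stepSign m s 1 = 0 := by
  rw [stepSign, if_neg]
  rintro ⟨h0, c, hc⟩
  have : (0 : ℤ) ≤ m := by positivity
  push_cast at hc
  rcases le_or_gt 0 c with h | h <;> nlinarith

theorem stepSign_one {m : ℕ} (s : ℤ) :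
    stepSign m s 1 = -stepSign m (s - m) 0 := by
  rcases lt_or_ge s m with h | h
  · rw [stepSign_one_of_lt h, stepSign_of_neg (by omega), neg_zero]
  · have h0 : 0 ≤ s := le_trans (by positivity) h
    have h1 : 0 ≤ s - m := by omega
    simp only [stepSign, h0, h1, true_and, Nat.cast_one, one_mul, pow_one, Nat.cast_zero, zero_mul,
      sub_zero, pow_zero]
    split_ifs <;> simp

theorem stepSign_zero {m : ℕ} {s : ℤ} (hs : s ≠ 0) :
    stepSign m s 0 = -stepSign m (s - m) 1 := by
  rw [stepSign_one, neg_neg]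
  have h0 : (0 : ℤ) ≤ m := by positivity
  unfold stepSign
  congr 1
  simp only [Nat.cast_zero, zero_mul, sub_zero, eq_iff_iff]
  constructor
  · rintro ⟨h, c, rfl⟩
    have hc : 0 < c := by
      by_contra! hc
      apply hs
      nlinarith
    exact ⟨by nlinarith, c - 1, by ring⟩
  · rintro ⟨h, c, hc⟩
    exact ⟨by linarith, c + 1, by linarith⟩

/-- The points of `ℤ/n`, encoded by doubling: `2 * p + ε` with `p < n` stands for the point `a`
with `2 * a = p + ε * n`. -/
def codes (n : ℕ) : Finset ℕ :=
  (Finset.range (2 * n)).filter fun x => x % 4 = 0 ∨ x % 2 = 1 ∧ (x + 2 * n) % 4 = 1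

/-- Two codes `x < y` are linked if they have equal labels or are at least `m` apart. -/
def Linked (m x y : ℕ) : Prop := x % 2 = y % 2 ∨ x / 2 + m ≤ y / 2

/-- The closed form of the signed number of chains of linked codes. -/
def chainVal (m v w : ℕ) : ℤ :=
  stepSign m ((w / 2 : ℕ) - (v / 2 : ℕ)) ((v + w) % 2) -
    stepSign m ((w / 2 : ℕ) - (v / 2 : ℕ) - 2) ((v + w) % 2)

theorem mem_codes {n x : ℕ} :
    x ∈ codes n ↔ x < 2 * n ∧ (x % 4 = 0 ∨ x % 2 = 1 ∧ (x + 2 * n) % 4 = 1) := by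
  simp [codes]

theorem sum_chainVal {n m : ℕ} (hm : 0 < m) {w : ℕ} (hw : w ∈ codes n) (q : ℕ)
    (hq : q % 4 = 0 ∨ q % 2 = 1 ∧ (q + 2 * n) % 4 = 1) :
    ∑ u ∈ (codes n).filter (fun u => u % 2 = q % 2 ∧ q ≤ u ∧ u ≤ w), chainVal m u w =
      stepSign m ((w / 2 : ℕ) - (q / 2 : ℕ)) ((q + w) % 2) := by
  rcases lt_or_ge w q with h | h
  · rw [Finset.sum_eq_zero]
    · symm
      rcases lt_or_ge (((w / 2 : ℕ) : ℤ) - (q / 2 : ℕ)) 0 with h' | h'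
      · exact stepSign_of_neg h'
      · have : (q + w) % 2 = 1 := by omega
        rw [this]
        exact stepSign_one_of_lt (by omega)
    · intro u hu
      simp only [Finset.mem_filter] at hu
      omega
  · have hV := hw
    rw [mem_codes] at hV
    have hset : (codes n).filter (fun u => u % 2 = q % 2 ∧ q ≤ u ∧ u ≤ w) =
        insert q ((codes n).filter (fun u => u % 2 = (q + 4) % 2 ∧ q + 4 ≤ u ∧ u ≤ w)) := by
      ext u
      simp only [Finset.mem_filter, Finset.mem_insert, mem_codes]
      omega
    rw [hset, Finset.sum_insert (by simp), sum_chainVal hm hw (q + 4) (by omega), chainVal]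
    have h1 : (((q + 4) / 2 : ℕ) : ℤ) = (q / 2 : ℕ) + 2 := by omega
    have h2 : (q + 4 + w) % 2 = (q + w) % 2 := by omega
    rw [h1, h2, sub_sub]
    ring
termination_by w + 1 - q

theorem linked_trans {m x y z : ℕ} (hxy : x < y) (hyz : y < z) (h : Linked m x y)
    (h' : Linked m y z) : Linked m x z := by
  unfold Linked at *
  omega

theorem chainSum_codes {n m : ℕ} (hm : 0 < m) (hmn : m % 2 = n % 2) {w : ℕ} (hw : w ∈ codes n)
    (v : ℕ) (hv : v ∈ codes n) (hvw : v ≤ w) :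
    chainSum (codes n) (Linked m) v w = chainVal m v w := by
  classical
  rcases hvw.eq_or_lt with rfl | hlt
  · have h2 : (v + v) % 2 = 0 := by omega
    rw [chainSum_self hv, chainVal, h2, stepSign_of_neg (s := _ - 2) (by omega)]
    simp [stepSign]
  · rw [chainSum_eq_neg_sum (fun x y z => linked_trans) hv hlt]
    have hV := mem_codes.1 hv
    have hW := mem_codes.1 hw
    set q := 2 * (v / 2 + m) + (1 - v % 2) with hqdef
    have hset : (codes n).filter (fun u => v < u ∧ u ≤ w ∧ Linked m v u) =
        (codes n).filter (fun u => u % 2 = (v + 4) % 2 ∧ v + 4 ≤ u ∧ u ≤ w) ∪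
        (codes n).filter (fun u => u % 2 = q % 2 ∧ q ≤ u ∧ u ≤ w) := by
      ext u
      simp only [Finset.mem_filter, Finset.mem_union, ← and_or_left]
      refine and_congr_right fun hu => ?_
      rw [mem_codes] at hu
      unfold Linked
      rcases Nat.mod_two_eq_zero_or_one v with h | h <;>
        rcases Nat.mod_two_eq_zero_or_one u with h' | h' <;> constructor <;> intro <;> omega
    have hdisj : Disjoint
        ((codes n).filter (fun u => u % 2 = (v + 4) % 2 ∧ v + 4 ≤ u ∧ u ≤ w))
        ((codes n).filter (fun u => u % 2 = q % 2 ∧ q ≤ u ∧ u ≤ w)) := by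
      rw [Finset.disjoint_left]
      intro u
      simp only [Finset.mem_filter]
      omega
    rw [Finset.sum_congr rfl (g := fun u => chainVal m u w) (fun u hu => by
      have hu' := Finset.mem_filter.1 hu
      exact chainSum_codes hm hmn hw u hu'.1 hu'.2.2.1), hset, Finset.sum_union hdisj,
      sum_chainVal hm hw _ (by omega), sum_chainVal hm hw _ (by omega), chainVal]
    have h1 : (((v + 4) / 2 : ℕ) : ℤ) = (v / 2 : ℕ) + 2 := by omega
    have h2 : (v + 4 + w) % 2 = (v + w) % 2 := by omega
    have h3 : ((q / 2 : ℕ) : ℤ) = (v / 2 : ℕ) + m := by omega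
    rw [h1, h2, h3, ← sub_sub, ← sub_sub]
    rcases Nat.mod_two_eq_zero_or_one (v + w) with h | h
    · have h4 : (q + w) % 2 = 1 := by omega
      rw [h, h4, stepSign_zero (s := ((w / 2 : ℕ) : ℤ) - (v / 2 : ℕ)) (by omega)]
      ring
    · have h4 : (q + w) % 2 = 0 := by omega
      rw [h, h4, stepSign_one (((w / 2 : ℕ) : ℤ) - (v / 2 : ℕ))]
      ring
termination_by w - v
decreasing_by
  classical
  have := (Finset.mem_filter.1 hu).2
  omega

/-- The condition on codes `x ≤ y` dual to `Linked`, for the way from `y` around to `x`. -/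
def WrapLinked (n m x y : ℕ) : Prop := x % 2 ≠ y % 2 ∨ y / 2 + m ≤ x / 2 + n

open Classical in
/-- The nonempty sets of pairwise compatible codes. -/
noncomputable def codeFaces (n m : ℕ) : Finset (Finset ℕ) :=
  (codes n).powerset.filter fun A =>
    A.Nonempty ∧ ∀ x ∈ A, ∀ y ∈ A, x < y → Linked m x y ∧ WrapLinked n m x y

open Classical in
theorem sum_codeFaces {n m : ℕ} (hmn : m ≤ n) :
    ∑ A ∈ codeFaces n m, (-1 : ℤ) ^ (A.card + 1) =
      ∑ w ∈ codes n, ∑ v ∈ (codes n).filter (fun v => v ≤ w ∧ WrapLinked n m v w),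
        chainSum (codes n) (Linked m) v w := by
  unfold chainSum
  simp_rw [Finset.sum_sigma']
  symm
  refine Finset.sum_bij (fun p _ => p.2.2) ?_ ?_ ?_ (fun _ _ => rfl)
  · rintro ⟨w, v, A⟩ h
    simp only [Finset.mem_sigma, Finset.mem_filter, mem_chainsBetween] at h
    obtain ⟨hw, ⟨hv, hvw, hwr⟩, hAV, hvA, hwA, hA, hAG⟩ := h
    simp only [codeFaces, Finset.mem_filter, Finset.mem_powerset]
    refine ⟨hAV, ⟨v, hvA⟩, fun x hx y hy hxy => ⟨hAG x hx y hy hxy, ?_⟩⟩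
    have hx1 := hA x hx
    have hy1 := hA y hy
    have hw' := (mem_codes.1 hw).1
    have h1 : v < x → Linked m v x := hAG v hvA x hx
    have h2 : y < w → Linked m y w := hAG y hy w hwA
    unfold WrapLinked Linked at *
    rcases eq_or_lt_of_le hx1.1 with rfl | h3 <;> rcases eq_or_lt_of_le hy1.2 with rfl | h4
    · exact hwr
    · specialize h2 h4
      omega
    · specialize h1 h3
      omega
    · specialize h1 h3
      specialize h2 h4
      omega
  · rintro ⟨w, v, A⟩ h ⟨w', v', A'⟩ h' heq
    simp only [Finset.mem_sigma, Finset.mem_filter, mem_chainsBetween] at h h' heq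
    subst heq
    obtain ⟨hw, ⟨hv, hvw, hwr⟩, hAV, hvA, hwA, hA, hAG⟩ := h
    obtain ⟨hw', ⟨hv', hvw', hwr'⟩, hAV', hvA', hwA', hA', hAG'⟩ := h'
    have h1 : v = v' := le_antisymm (hA _ hvA').1 (hA' _ hvA).1
    have h2 : w = w' := le_antisymm (hA' _ hwA).2 (hA _ hwA').2
    subst h1 h2
    rfl
  · intro A h
    simp only [codeFaces, Finset.mem_filter, Finset.mem_powerset] at h
    obtain ⟨hAV, hne, hA⟩ := h
    refine ⟨⟨A.max' hne, A.min' hne, A⟩, ?_, rfl⟩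
    simp only [Finset.mem_sigma, Finset.mem_filter, mem_chainsBetween]
    refine ⟨hAV (A.max'_mem hne), ⟨hAV (A.min'_mem hne), A.min'_le _ (A.max'_mem hne), ?_⟩,
      hAV, A.min'_mem hne, A.max'_mem hne, fun x hx => ⟨A.min'_le x hx, A.le_max' x hx⟩,
      fun x hx y hy hxy => (hA x hx y hy hxy).1⟩
    rcases eq_or_lt_of_le (A.min'_le _ (A.max'_mem hne)) with h | h
    · rw [h]
      unfold WrapLinked
      omega
    · exact (hA _ (A.min'_mem hne) _ (A.max'_mem hne) h).2

open Classical in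
theorem sum_chainSum_left {n m : ℕ} (hm : 0 < m) (hpar : m % 2 = n % 2) {w : ℕ}
    (hw : w ∈ codes n) :
    ∑ v ∈ (codes n).filter (fun v => v ≤ w ∧ WrapLinked n m v w),
        chainSum (codes n) (Linked m) v w =
      stepSign m ((w / 2 : ℕ) - (max (w % 4) (w + 2 * m - 2 * n) / 2 : ℕ)) 0 +
      stepSign m ((w / 2 : ℕ) - (if w % 2 = 0 then n % 2 else 0 : ℕ)) 1 := by
  have hW := mem_codes.1 hw
  set q := max (w % 4) (w + 2 * m - 2 * n) with hq
  obtain ⟨q', hq'⟩ : ∃ q', q' = if w % 2 = 0 then 2 * (n % 2) + 1 else 0 := ⟨_, rfl⟩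
  have hset : (codes n).filter (fun v => v ≤ w ∧ WrapLinked n m v w) =
      (codes n).filter (fun u => u % 2 = q % 2 ∧ q ≤ u ∧ u ≤ w) ∪
      (codes n).filter (fun u => u % 2 = q' % 2 ∧ q' ≤ u ∧ u ≤ w) := by
    ext u
    simp only [Finset.mem_filter, Finset.mem_union, ← and_or_left]
    refine and_congr_right fun hu => ?_
    rw [mem_codes] at hu
    unfold WrapLinked
    split_ifs at hq' <;> rcases Nat.mod_two_eq_zero_or_one u with h' | h' <;>
      constructor <;> intro <;> omega
  have hdisj : Disjoint ((codes n).filter (fun u => u % 2 = q % 2 ∧ q ≤ u ∧ u ≤ w))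
      ((codes n).filter (fun u => u % 2 = q' % 2 ∧ q' ≤ u ∧ u ≤ w)) := by
    rw [Finset.disjoint_left]
    intro u
    simp only [Finset.mem_filter]
    split_ifs at hq' <;> omega
  rw [Finset.sum_congr rfl (g := fun v => chainVal m v w) (fun v hv => by
    have hv' := Finset.mem_filter.1 hv
    exact chainSum_codes hm hpar hw v hv'.1 hv'.2.1), hset, Finset.sum_union hdisj,
    sum_chainVal hm hw _ (by omega), sum_chainVal hm hw _ (by split_ifs at hq' <;> omega)]
  have h1 : (q + w) % 2 = 0 := by omega
  have h2 : (q' + w) % 2 = 1 := by split_ifs at hq' <;> omega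
  have h3 : q' / 2 = if w % 2 = 0 then n % 2 else 0 := by split_ifs at hq' ⊢ <;> omega
  rw [h1, h2, h3]

theorem card_codes_filter {n m : ℕ} (hmn : m ≤ n) (hpar : m % 2 = n % 2) :
    ((codes n).filter fun w => n - m ≤ w / 2).card = m := by
  have hset : (codes n).filter (fun w => n - m ≤ w / 2) =
      (Finset.Ico ((n - m) / 2) ((n + 1) / 2)).image (fun a => 4 * a) ∪
      (Finset.Ico ((n - m) / 2) (n / 2)).image (fun a => 4 * a + 2 * (n % 2) + 1) := by
    ext u
    simp only [Finset.mem_filter, Finset.mem_union, Finset.mem_image, Finset.mem_Ico, mem_codes]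
    constructor
    · rintro ⟨⟨h1, h2 | h2⟩, h3⟩
      · exact Or.inl ⟨u / 4, by omega, by omega⟩
      · exact Or.inr ⟨u / 4, by omega, by omega⟩
    · rintro (⟨a, h, rfl⟩ | ⟨a, h, rfl⟩) <;> omega
  rw [hset, Finset.card_union_of_disjoint, Finset.card_image_of_injective,
    Finset.card_image_of_injective, Nat.card_Ico, Nat.card_Ico]
  · omega
  · intro a b h
    simp only at h
    omega
  · intro a b h
    simp only at h
    omega
  · rw [Finset.disjoint_left]
    intro u h1 h2
    obtain ⟨a, -, rfl⟩ := Finset.mem_image.1 h1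
    obtain ⟨b, -, h⟩ := Finset.mem_image.1 h2
    omega

theorem sum_codeFaces_eq {n m : ℕ} (hm : 0 < m) (hmn : m ≤ n) (hpar : m % 2 = n % 2) :
    ∑ A ∈ codeFaces n m, (-1 : ℤ) ^ (A.card + 1) = if 2 * m ∣ n - m then (m : ℤ) else 0 := by
  classical
  rw [sum_codeFaces hmn, Finset.sum_congr rfl fun w hw => sum_chainSum_left hm hpar hw,
    Finset.sum_add_distrib,
    ← Finset.sum_filter_add_sum_filter_not (codes n) (fun w => n - m ≤ w / 2),
    ← Finset.sum_filter_add_sum_filter_not (codes n) (fun w => m ≤ w / 2)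
      (f := fun w => stepSign m ((w / 2 : ℕ) - (if w % 2 = 0 then n % 2 else 0 : ℕ)) 1)]
  have hlow : ∑ w ∈ (codes n).filter (fun w => ¬ m ≤ w / 2),
      stepSign m ((w / 2 : ℕ) - (if w % 2 = 0 then n % 2 else 0 : ℕ)) 1 = 0 := by
    refine Finset.sum_eq_zero fun w hw => stepSign_one_of_lt ?_
    have := (Finset.mem_filter.1 hw).2
    omega
  have hhigh : ∑ w ∈ (codes n).filter (fun w => n - m ≤ w / 2),
      stepSign m ((w / 2 : ℕ) - (max (w % 4) (w + 2 * m - 2 * n) / 2 : ℕ)) 0 =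
        m * stepSign m ((n : ℤ) - m) 0 := by
    rw [Finset.sum_congr rfl (g := fun _ => stepSign m ((n : ℤ) - m) 0) (fun w hw => ?_),
      Finset.sum_const, card_codes_filter hmn hpar, nsmul_eq_mul]
    have h1 := Finset.mem_filter.1 hw
    have h2 := mem_codes.1 h1.1
    congr 1
    omega
  have hshift : ∑ w ∈ (codes n).filter (fun w => m ≤ w / 2),
      stepSign m ((w / 2 : ℕ) - (if w % 2 = 0 then n % 2 else 0 : ℕ)) 1 =
      -∑ w ∈ (codes n).filter (fun w => ¬ n - m ≤ w / 2),
      stepSign m ((w / 2 : ℕ) - (max (w % 4) (w + 2 * m - 2 * n) / 2 : ℕ)) 0 := by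
    rw [← Finset.sum_neg_distrib]
    refine Finset.sum_bij' (fun w _ => 2 * (w / 2 - m) + (1 - w % 2))
      (fun w _ => 2 * (w / 2 + m) + (1 - w % 2)) ?_ ?_ ?_ ?_ ?_
    · intro w
      simp only [Finset.mem_filter, mem_codes]
      omega
    · intro w
      simp only [Finset.mem_filter, mem_codes]
      omega
    · intro w
      simp only [Finset.mem_filter, mem_codes]
      omega
    · intro w
      simp only [Finset.mem_filter, mem_codes]
      omega
    · intro w hw
      rw [stepSign_one]
      have h1 := Finset.mem_filter.1 hw
      have h2 := mem_codes.1 h1.1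
      congr 2
      split_ifs <;> omega
  rw [hlow, hhigh, hshift]
  have : stepSign m ((n : ℤ) - m) 0 = if 2 * m ∣ n - m then 1 else 0 := by
    have h2 : ((2 * m : ℤ) ∣ (n : ℤ) - m) ↔ 2 * m ∣ n - m := by
      rw [← Int.natCast_dvd_natCast]
      push_cast [hmn]
      rfl
    simp [stepSign, hmn, h2]
  rw [this]
  split_ifs <;> simp

/-- The distance from `a` to `b` in the cycle graph on `n` vertices, for `a, b < n`. -/
def cycDist (n a b : ℕ) : ℕ := min (a - b + (b - a)) (n - (a - b + (b - a)))

/-- The code of the point `a` of `ℤ/n`. -/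
def toCode (n a : ℕ) : ℕ := if 2 * a < n then 4 * a else 4 * a + 1 - 2 * n

theorem toCode_injOn (n : ℕ) : Set.InjOn (toCode n) (Finset.range n) := by
  intro a ha b hb h
  simp only [Finset.coe_range, Set.mem_Iio] at ha hb
  unfold toCode at h
  split_ifs at h <;> omega

theorem codes_eq_image (n : ℕ) : codes n = (Finset.range n).image (toCode n) := by
  ext x
  simp only [mem_codes, Finset.mem_image, Finset.mem_range]
  constructor
  · rintro ⟨h1, h2 | h2⟩
    · refine ⟨x / 4, by omega, ?_⟩
      unfold toCode
      split_ifs <;> omega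
    · refine ⟨(x + 2 * n) / 4, by omega, ?_⟩
      unfold toCode
      split_ifs <;> omega
  · rintro ⟨a, ha, rfl⟩
    unfold toCode
    split_ifs <;> omega

theorem cycDist_le_iff {n k a b : ℕ} (hk : 2 * k < n) (ha : a < n) (hb : b < n)
    (hab : toCode n a < toCode n b) :
    cycDist n a b ≤ k ↔ Linked (n - 2 * k) (toCode n a) (toCode n b) ∧
      WrapLinked n (n - 2 * k) (toCode n a) (toCode n b) := by
  unfold Linked WrapLinked toCode cycDist at *
  split_ifs at * <;> constructor <;> intro <;> omega

theorem cycDist_comm (n a b : ℕ) : cycDist n a b = cycDist n b a := by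
  unfold cycDist
  rw [add_comm]

theorem cycDist_self (n a : ℕ) : cycDist n a a = 0 := by
  simp [cycDist]

theorem cycDist_le_half (n a b : ℕ) : cycDist n a b ≤ n / 2 := by
  unfold cycDist
  omega

theorem sum_image_powerset {α β M : Type*} [DecidableEq α] [DecidableEq β] [AddCommMonoid M]
    {f : α → β} {s : Finset α} (hf : Set.InjOn f s) (F : Finset β → M) :
    ∑ A ∈ (s.image f).powerset, F A = ∑ B ∈ s.powerset, F (B.image f) := by
  rw [Finset.powerset_image, Finset.sum_image]
  intro A hA B hB h
  simp only [Finset.coe_powerset, Set.mem_preimage, Set.mem_powerset_iff] at hA hB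
  exact Finset.coe_injective ((hf.image_eq_image_iff hA hB).1 (by exact_mod_cast h))

open Classical in
/-- The Euler characteristic of the clique complex of the `k`-th power of the cycle on `n`
vertices. -/
theorem sum_cycDist_le {n k : ℕ} (hk : 2 * k < n) :
    ∑ B ∈ (Finset.range n).powerset,
      (if B.Nonempty ∧ ∀ a ∈ B, ∀ b ∈ B, cycDist n a b ≤ k then (-1 : ℤ) ^ (B.card + 1) else 0) =
    if n - 2 * k ∣ k then ((n - 2 * k : ℕ) : ℤ) else 0 := by
  have hdvd : 2 * (n - 2 * k) ∣ n - (n - 2 * k) ↔ n - 2 * k ∣ k := by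
    rw [Nat.sub_sub_self hk.le]
    exact Nat.mul_dvd_mul_iff_left two_pos
  have key := sum_codeFaces_eq (n := n) (m := n - 2 * k) (by omega) (by omega) (by omega)
  simp only [hdvd] at key
  rw [← key, codeFaces, Finset.sum_filter, codes_eq_image, sum_image_powerset (toCode_injOn n)]
  refine Finset.sum_congr rfl fun B hB => ?_
  have hB' : ∀ a ∈ B, a < n := fun a ha => Finset.mem_range.1 (Finset.mem_powerset.1 hB ha)
  have hinj : Set.InjOn (toCode n) B := (toCode_injOn n).mono (Finset.mem_powerset.1 hB)
  rw [Finset.card_image_of_injOn hinj]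
  refine if_congr ?_ rfl rfl
  rw [Finset.image_nonempty]
  refine and_congr_right fun _ => ?_
  simp only [Finset.forall_mem_image]
  constructor
  · intro h a ha b hb hab
    exact (cycDist_le_iff hk (hB' a ha) (hB' b hb) hab).1 (h a ha b hb)
  · intro h a ha b hb
    rcases lt_trichotomy (toCode n a) (toCode n b) with hab | hab | hab
    · exact (cycDist_le_iff hk (hB' a ha) (hB' b hb) hab).2 (h ha hb hab)
    · rw [hinj ha hb hab, cycDist_self]
      exact Nat.zero_le _
    · rw [cycDist_comm]
      exact (cycDist_le_iff hk (hB' b hb) (hB' a ha) hab).2 (h hb ha hab)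

/-- The Euclidean distance between two points of the Euclidean cycle `C_n` at distance `j` in the
cycle graph. -/
noncomputable def chord (n j : ℕ) : ℝ := 2 * Real.sin (π * j / n)

/-- The `k`-th point of the Euclidean cycle `C_n`. -/
noncomputable def cyclePt (n k : ℕ) : ℂ :=
  Complex.exp (2 * (π : ℂ) * (k : ℂ) / (n : ℂ) * Complex.I)

theorem dist_cyclePt_of_le {n a b : ℕ} (hab : a ≤ b) (hb : b < n) :
    dist (cyclePt n a) (cyclePt n b) = chord n (cycDist n a b) := by
  have hn : (0 : ℝ) < n := by exact_mod_cast (Nat.zero_le b).trans_lt hb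
  have hn' : (n : ℂ) ≠ 0 := by exact_mod_cast hn.ne'
  have h1 : dist (cyclePt n a) (cyclePt n b) = 2 * |Real.sin (π * (b - a : ℕ) / n)| := by
    have : cyclePt n b - cyclePt n a = cyclePt n a *
        (Complex.exp (Complex.I * ((2 * π * (b - a : ℕ) / n : ℝ) : ℂ)) - 1) := by
      rw [mul_sub, mul_one, cyclePt, cyclePt, ← Complex.exp_add]
      congr 2
      push_cast [hab]
      field_simp
      ring
    rw [dist_comm, dist_eq_norm, this, norm_mul, Complex.norm_exp_I_mul_ofReal_sub_one]
    have h2 : ‖cyclePt n a‖ = 1 := by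
      have := Complex.norm_exp_ofReal_mul_I (2 * π * a / n)
      rw [cyclePt]
      push_cast at this
      exact this
    rw [h2, one_mul, norm_mul, Real.norm_eq_abs, Real.norm_eq_abs, abs_two]
    congr 3
    ring
  have hd : ((b - a : ℕ) : ℝ) ≤ n := by exact_mod_cast (by omega)
  have hpos : 0 ≤ Real.sin (π * (b - a : ℕ) / n) := by
    apply Real.sin_nonneg_of_nonneg_of_le_pi (by positivity)
    rw [div_le_iff₀ hn]
    gcongr
  rw [h1, abs_of_nonneg hpos, chord]
  congr 1
  have h3 : cycDist n a b = b - a ∨ cycDist n a b = n - (b - a) := by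
    unfold cycDist
    omega
  rcases h3 with h3 | h3 <;> rw [h3]
  rw [← Real.sin_pi_sub]
  congr 1
  rw [Nat.cast_sub (show b - a ≤ n by omega)]
  field_simp

theorem dist_cyclePt {n a b : ℕ} (ha : a < n) (hb : b < n) :
    dist (cyclePt n a) (cyclePt n b) = chord n (cycDist n a b) := by
  rcases le_total a b with h | h
  · exact dist_cyclePt_of_le h hb
  · rw [dist_comm, cycDist_comm]
    exact dist_cyclePt_of_le h ha

theorem chord_strictMonoOn (n : ℕ) : StrictMonoOn (chord n) (Set.Iic (n / 2)) := by
  intro i hi j hj hij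
  simp only [Set.mem_Iic] at hi hj
  have hn : (0 : ℝ) < n := by exact_mod_cast (by omega : 0 < n)
  unfold chord
  have hj' : (2 * j : ℝ) ≤ n := by exact_mod_cast (by omega : 2 * j ≤ n)
  have hij' : (i : ℝ) < j := by exact_mod_cast hij
  gcongr
  refine Real.sin_lt_sin_of_lt_of_le_pi_div_two ?_ ?_ (by gcongr)
  · have : 0 ≤ π * i / n := by positivity
    linarith [Real.pi_pos]
  · rw [div_le_iff₀ hn]
    nlinarith [Real.pi_pos]

theorem cyclePt_injOn (n : ℕ) : Set.InjOn (cyclePt n) (Finset.range n) := by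
  intro a ha b hb h
  simp only [Finset.coe_range, Set.mem_Iio] at ha hb
  have h1 := dist_cyclePt ha hb
  rw [h, dist_self] at h1
  have h0 : chord n 0 = 0 := by simp [chord]
  rw [← h0] at h1
  have := (chord_strictMonoOn n).injOn (Nat.zero_le _) (cycDist_le_half n a b) h1
  unfold cycDist at this
  omega

/-- The largest distance in the cycle graph between two elements of `B`. -/
def cycDiam (n : ℕ) (B : Finset ℕ) : ℕ := B.sup fun a => B.sup fun b => cycDist n a b

theorem cycDiam_le_iff {n k : ℕ} {B : Finset ℕ} :
    cycDiam n B ≤ k ↔ ∀ a ∈ B, ∀ b ∈ B, cycDist n a b ≤ k := by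
  simp [cycDiam, Finset.sup_le_iff]

theorem diam_image_cyclePt {n : ℕ} {B : Finset ℕ} (hB : B ⊆ Finset.range n) (hne : B.Nonempty) :
    Metric.diam ((B.image (cyclePt n) : Finset ℂ) : Set ℂ) = chord n (cycDiam n B) := by
  have hB' : ∀ a ∈ B, a < n := fun a ha => Finset.mem_range.1 (hB ha)
  have hhalf : cycDiam n B ≤ n / 2 := cycDiam_le_iff.2 fun a _ b _ => cycDist_le_half n a b
  have hmono := (chord_strictMonoOn n).monotoneOn
  apply le_antisymm
  · refine Metric.diam_le_of_forall_dist_le ?_ ?_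
    · have := hmono (Nat.zero_le _) hhalf (Nat.zero_le _)
      simpa [chord] using this
    · intro x hx y hy
      obtain ⟨a, ha, rfl⟩ := Finset.mem_image.1 (Finset.mem_coe.1 hx)
      obtain ⟨b, hb, rfl⟩ := Finset.mem_image.1 (Finset.mem_coe.1 hy)
      rw [dist_cyclePt (hB' a ha) (hB' b hb)]
      exact hmono (cycDist_le_half n a b) hhalf (cycDiam_le_iff.1 le_rfl a ha b hb)
  · obtain ⟨a, ha, hae⟩ := Finset.exists_mem_eq_sup B hne fun a => B.sup fun b => cycDist n a b
    obtain ⟨b, hb, hbe⟩ := Finset.exists_mem_eq_sup B hne fun b => cycDist n a b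
    rw [cycDiam, hae, hbe, ← dist_cyclePt (hB' a ha) (hB' b hb)]
    exact Metric.dist_le_diam_of_mem (Finset.finite_toSet _).isBounded
      (Finset.mem_coe.2 (Finset.mem_image_of_mem _ ha))
      (Finset.mem_coe.2 (Finset.mem_image_of_mem _ hb))

theorem eq_add_sum_ite_le (f : ℕ → ℝ) {c K : ℕ} (h : c ≤ K) :
    f c = f K + ∑ k ∈ Finset.range K, if c ≤ k then f k - f (k + 1) else 0 := by
  induction K, h using Nat.le_induction with
  | base =>
    rw [Finset.sum_eq_zero, add_zero]
    intro k hk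
    rw [if_neg (by simpa using hk)]
  | succ K h ih =>
    rw [Finset.sum_range_succ, if_pos h]
    linarith

theorem ripsMag_euclCycle {n : ℕ} (hn : 0 < n) (t : ℝ) :
    ripsMag (euclCycle n) t = Real.exp (-chord n (n / 2) * t) +
      ∑ k ∈ Finset.range (n / 2), (if n - 2 * k ∣ k then ((n - 2 * k : ℕ) : ℝ) else 0) *
        (Real.exp (-chord n k * t) - Real.exp (-chord n (k + 1) * t)) := by
  classical
  set f : ℕ → ℝ := fun k => Real.exp (-chord n k * t) with hf
  have h1 : ripsMag (euclCycle n) t = ∑ B ∈ (Finset.range n).powerset,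
      if B.Nonempty then (-1 : ℝ) ^ (B.card + 1) * f (cycDiam n B) else 0 := by
    have : euclCycle n = (Finset.range n).image (cyclePt n) := by
      unfold euclCycle cyclePt
      congr
    rw [ripsMag, Finset.sum_filter, this, sum_image_powerset (cyclePt_injOn n)]
    refine Finset.sum_congr rfl fun B hB => ?_
    have hB' := Finset.mem_powerset.1 hB
    by_cases hne : B.Nonempty
    · rw [if_pos hne, if_pos (hne.image _), diam_image_cyclePt hB' hne,
        Finset.card_image_of_injOn ((cyclePt_injOn n).mono hB')]
      congr 1
      obtain ⟨c, hc⟩ := Nat.exists_eq_add_of_lt hne.card_pos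
      rw [hc]
      simp [pow_succ]
    · simp [hne]
  have hsign : ∑ B ∈ (Finset.range n).powerset,
      (if B.Nonempty then (-1 : ℝ) ^ (B.card + 1) else 0) = 1 := by
    have h := Finset.sum_powerset_neg_one_pow_card (x := Finset.range n)
    rw [if_neg (by simpa using hn.ne')] at h
    have h' : ∑ B ∈ (Finset.range n).powerset,
        ((if B.Nonempty then (-1 : ℤ) ^ (B.card + 1) else 0) + (-1) ^ B.card) = 1 := by
      rw [Finset.sum_eq_single ∅]
      · simp
      · intro B _ hB
        rw [if_pos (Finset.nonempty_iff_ne_empty.2 hB)]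
        ring
      · simp
    rw [Finset.sum_add_distrib, h, add_zero] at h'
    exact_mod_cast h'
  have hchi : ∀ k ∈ Finset.range (n / 2), ∑ B ∈ (Finset.range n).powerset,
      (if B.Nonempty ∧ cycDiam n B ≤ k then (-1 : ℝ) ^ (B.card + 1) else 0) =
        if n - 2 * k ∣ k then ((n - 2 * k : ℕ) : ℝ) else 0 := by
    intro k hk
    have hk' : 2 * k < n := by
      have := Finset.mem_range.1 hk
      omega
    have h := sum_cycDist_le hk'
    simp only [cycDiam_le_iff]
    exact_mod_cast h
  rw [h1]
  calc _ = ∑ B ∈ (Finset.range n).powerset,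
        ((if B.Nonempty then (-1 : ℝ) ^ (B.card + 1) else 0) * f (n / 2) +
          ∑ k ∈ Finset.range (n / 2),
            (if B.Nonempty ∧ cycDiam n B ≤ k then (-1 : ℝ) ^ (B.card + 1) else 0) *
              (f k - f (k + 1))) := by
        refine Finset.sum_congr rfl fun B hB => ?_
        by_cases hne : B.Nonempty
        · simp only [hne, true_and, if_true]
          rw [eq_add_sum_ite_le f (c := cycDiam n B) (K := n / 2)
            (cycDiam_le_iff.2 fun a _ b _ => cycDist_le_half n a b), mul_add, Finset.mul_sum]
          congr 1
          refine Finset.sum_congr rfl fun k _ => ?_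
          split_ifs <;> simp
        · simp [hne]
    _ = _ := by
        rw [Finset.sum_add_distrib, ← Finset.sum_mul, hsign, one_mul, Finset.sum_comm]
        congr 1
        refine Finset.sum_congr rfl fun k hk => ?_
        rw [← Finset.sum_mul, hchi k hk]

/-- The contribution of an odd divisor `r` of `n` to the Rips magnitude of `C_n^eucl`. -/
noncomputable def cycleTerm (t : ℝ) (n r : ℕ) : ℝ :=
  (n / r : ℝ) * (Real.exp (-2 * t * Real.cos (π / (2 * r))) -
    Real.exp (-2 * t * Real.cos (π / (2 * r) - π / n)))

open Classical in
theorem ripsMag_euclCycle_eq_tsum {n : ℕ} (hn : 0 < n) (t : ℝ) :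
    ripsMag (euclCycle n) t = Real.exp (-chord n (n / 2) * t) +
      ∑' r : ℕ, if Odd r ∧ r < n ∧ r ∣ n then cycleTerm t n r else 0 := by
  rw [ripsMag_euclCycle hn, tsum_eq_sum (s := Finset.range n) fun r hr => by
    rw [if_neg]
    rintro ⟨-, h, -⟩
    exact hr (Finset.mem_range.2 h)]
  congr 1
  simp only [ite_mul, zero_mul]
  rw [← Finset.sum_filter, ← Finset.sum_filter]
  have hdata : ∀ k ∈ (Finset.range (n / 2)).filter (fun k => n - 2 * k ∣ k),
      ∃ d l, 2 ≤ d ∧ n = d * (2 * l + 1) ∧ k = d * l ∧ n - 2 * k = d ∧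
        n / (n - 2 * k) = 2 * l + 1 := by
    intro k hk
    simp only [Finset.mem_filter, Finset.mem_range] at hk
    obtain ⟨hk, l, hl⟩ := hk
    have hn' : n = (n - 2 * k) * (2 * l + 1) := by
      rw [mul_add, mul_left_comm, ← hl]
      omega
    refine ⟨n - 2 * k, l, by omega, hn', hl, rfl, ?_⟩
    exact Nat.div_eq_of_eq_mul_right (by omega) hn'
  have hdata' : ∀ r ∈ (Finset.range n).filter (fun r => Odd r ∧ r < n ∧ r ∣ n),
      ∃ d l, 2 ≤ d ∧ n = d * (2 * l + 1) ∧ r = 2 * l + 1 ∧ n / r = d ∧ (n - n / r) / 2 = d * l := by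
    intro r hr
    simp only [Finset.mem_filter, Finset.mem_range] at hr
    obtain ⟨-, ⟨l, rfl⟩, hlt, d, hd⟩ := hr
    have h1 : n / (2 * l + 1) = d := Nat.div_eq_of_eq_mul_right (by omega) hd
    refine ⟨d, l, ?_, by rw [hd, mul_comm], rfl, h1, ?_⟩
    · by_contra! h
      interval_cases d <;> omega
    · have : n = 2 * (d * l) + d := by rw [hd]; ring
      omega
  refine Finset.sum_bij' (fun k _ => n / (n - 2 * k)) (fun r _ => (n - n / r) / 2) ?_ ?_ ?_ ?_ ?_
  · intro k hk
    obtain ⟨d, l, hd, hnd, hkl, hd', hr⟩ := hdata k hk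
    rw [hr]
    simp only [Finset.mem_filter, Finset.mem_range]
    have : 2 * l + 1 < n := by nlinarith
    exact ⟨this, ⟨l, rfl⟩, this, d, by rw [hnd, mul_comm]⟩
  · intro r hr
    obtain ⟨d, l, hd, hnd, hrl, hd', hk⟩ := hdata' r hr
    have h1 : n = 2 * (d * l) + d := by rw [hnd]; ring
    have h2 : n - 2 * (d * l) = d := by omega
    rw [hk]
    simp only [Finset.mem_filter, Finset.mem_range]
    exact ⟨by omega, by rw [h2]; exact dvd_mul_right d l⟩
  · intro k hk
    obtain ⟨d, l, hd, hnd, hkl, hd', hr⟩ := hdata k hk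
    have h1 : n = 2 * (d * l) + d := by rw [hnd]; ring
    have h2 : n / (2 * l + 1) = d :=
      Nat.div_eq_of_eq_mul_right (by omega) (by rw [hnd, mul_comm])
    rw [hr, h2]
    omega
  · intro r hr
    obtain ⟨d, l, hd, hnd, hrl, hd', hk⟩ := hdata' r hr
    have h1 : n = 2 * (d * l) + d := by rw [hnd]; ring
    have h2 : n - 2 * (d * l) = d := by omega
    rw [hk, h2, hrl]
    exact Nat.div_eq_of_eq_mul_right (by omega) hnd
  · intro k hk
    obtain ⟨d, l, hd, hnd, hkl, hd', hr⟩ := hdata k hk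
    have hd0 : (d : ℝ) ≠ 0 := by exact_mod_cast (by omega : d ≠ 0)
    have hl0 : (2 * l + 1 : ℝ) ≠ 0 := by positivity
    have hnR : (n : ℝ) = d * (2 * l + 1) := by exact_mod_cast hnd
    have hkR : (k : ℝ) = d * l := by exact_mod_cast hkl
    have hc1 : chord n k = 2 * Real.cos (π / (2 * (2 * l + 1 : ℝ))) := by
      rw [chord, ← Real.sin_pi_div_two_sub, hnR, hkR]
      congr 2
      field_simp
      ring
    have hc2 : chord n (k + 1) = 2 * Real.cos (π / (2 * (2 * l + 1 : ℝ)) - π / n) := by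
      rw [chord, ← Real.sin_pi_div_two_sub]
      push_cast
      rw [hnR, hkR]
      congr 2
      field_simp
      ring
    rw [hr, hd', cycleTerm, hc1, hc2]
    push_cast
    have h3 : (n : ℝ) / (2 * l + 1) = d := by
      rw [hnR]
      field_simp
    rw [h3]
    congr 3 <;> ring

theorem cycleTerm_bounds {t : ℝ} (ht : 0 < t) {n r : ℕ} (hr : 0 < r) (hrn : r ≤ n) :
    0 ≤ cycleTerm t n r ∧ cycleTerm t n r ≤ t * π ^ 2 * (1 / (r : ℝ) ^ 2) := by
  have hr' : (0 : ℝ) < r := by exact_mod_cast hr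
  have hn' : (0 : ℝ) < n := by exact_mod_cast hr.trans_le hrn
  have hr1 : (1 : ℝ) ≤ r := by exact_mod_cast hr
  have hpi := Real.pi_pos
  set a := π / (2 * r) with ha
  set h := π / n with hh
  have hh0 : 0 < h := by positivity
  have ha2 : a ≤ π / 2 := by
    rw [ha]
    gcongr
    linarith
  have hha : h / 2 ≤ a := by
    rw [ha, hh, div_div, mul_comm]
    gcongr
  have hcos : 0 ≤ Real.cos a :=
    Real.cos_nonneg_of_neg_pi_div_two_le_of_le (by linarith) ha2
  have hdiff : Real.cos (a - h) - Real.cos a = 2 * Real.sin (a - h / 2) * Real.sin (h / 2) := by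
    rw [Real.cos_sub_cos, show (a - h + a) / 2 = a - h / 2 by ring,
      show (a - h - a) / 2 = -(h / 2) by ring, Real.sin_neg]
    ring
  have hs1 : 0 ≤ Real.sin (a - h / 2) :=
    Real.sin_nonneg_of_nonneg_of_le_pi (by linarith) (by linarith)
  have hs2 : 0 ≤ Real.sin (h / 2) :=
    Real.sin_nonneg_of_nonneg_of_le_pi (by linarith) (by linarith)
  have hs1' : Real.sin (a - h / 2) ≤ a := (Real.sin_le (by linarith)).trans (by linarith)
  have hs2' : Real.sin (h / 2) ≤ h / 2 := Real.sin_le (by linarith)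
  have hd0 : 0 ≤ Real.cos (a - h) - Real.cos a := by
    rw [hdiff]
    positivity
  have hd1 : Real.cos (a - h) - Real.cos a ≤ a * h := by
    rw [hdiff]
    nlinarith [mul_le_mul hs1' hs2' hs2 (hs1.trans hs1')]
  have hexp0 : 0 ≤ Real.exp (-2 * t * Real.cos a) - Real.exp (-2 * t * Real.cos (a - h)) := by
    rw [sub_nonneg, Real.exp_le_exp]
    nlinarith
  have hexp1 : Real.exp (-2 * t * Real.cos a) - Real.exp (-2 * t * Real.cos (a - h)) ≤
      2 * t * (a * h) := by
    have h1 : Real.exp (-2 * t * Real.cos (a - h)) = Real.exp (-2 * t * Real.cos a) *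
        Real.exp (-(2 * t * (Real.cos (a - h) - Real.cos a))) := by
      rw [← Real.exp_add]
      congr 1
      ring
    have h2 := Real.add_one_le_exp (-(2 * t * (Real.cos (a - h) - Real.cos a)))
    have h3 : Real.exp (-2 * t * Real.cos a) ≤ 1 := by
      rw [Real.exp_le_one_iff]
      nlinarith
    have h4 := Real.exp_pos (-2 * t * Real.cos a)
    have h5 : 0 ≤ 2 * t * (Real.cos (a - h) - Real.cos a) := by positivity
    have h6 : 2 * t * (Real.cos (a - h) - Real.cos a) ≤ 2 * t * (a * h) := by gcongr
    rw [h1]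
    nlinarith
  refine ⟨mul_nonneg (by positivity) hexp0, ?_⟩
  calc cycleTerm t n r ≤ (n / r : ℝ) * (2 * t * (a * h)) := by
        unfold cycleTerm
        gcongr
    _ = t * π ^ 2 * (1 / (r : ℝ) ^ 2) := by
        rw [ha, hh]
        field_simp

theorem tendsto_cycleTerm (t : ℝ) (r : ℕ) :
    Filter.Tendsto (fun n => cycleTerm t n r) Filter.atTop
      (nhds (2 * π * t * euclSeriesTerm t r)) := by
  set a := π / (2 * (r : ℝ)) with ha
  have hder : HasDerivAt (fun h : ℝ => Real.exp (-2 * t * Real.cos (a - h)))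
      (Real.exp (-2 * t * Real.cos a) * (-2 * t * Real.sin a)) 0 := by
    have h1 : HasDerivAt (fun h : ℝ => a - h) (-1) 0 := by
      simpa using (hasDerivAt_id (0 : ℝ)).const_sub a
    have h2 := ((h1.cos).const_mul (-2 * t)).exp
    convert h2 using 1
    simp
  have hlim : Filter.Tendsto (fun n : ℕ => π / (n : ℝ)) Filter.atTop (nhdsWithin 0 {0}ᶜ) := by
    rw [tendsto_nhdsWithin_iff]
    refine ⟨tendsto_const_div_atTop_nhds_zero_nat π, ?_⟩
    filter_upwards [Filter.eventually_gt_atTop 0] with n hn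
    have : (0 : ℝ) < n := by exact_mod_cast hn
    have := Real.pi_pos
    simp only [Set.mem_compl_iff, Set.mem_singleton_iff]
    positivity
  have h := (hder.tendsto_slope_zero.comp hlim).const_mul (-π / r)
  have heq : -π / r * (Real.exp (-2 * t * Real.cos a) * (-2 * t * Real.sin a)) =
      2 * π * t * euclSeriesTerm t r := by
    unfold euclSeriesTerm
    ring
  rw [heq] at h
  refine h.congr' ?_
  filter_upwards [Filter.eventually_gt_atTop 0] with n hn
  have hn' : (n : ℝ) ≠ 0 := by exact_mod_cast hn.ne'
  have hpi := Real.pi_ne_zero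
  simp only [Function.comp_apply, zero_add, sub_zero, smul_eq_mul, cycleTerm, ← ha]
  field_simp
  ring

theorem tendsto_exp_chord_half (t : ℝ) :
    Filter.Tendsto (fun n : ℕ => Real.exp (-chord n (n / 2) * t)) Filter.atTop
      (nhds (Real.exp (-2 * t))) := by
  have h1 : Filter.Tendsto (fun n : ℕ => ((n / 2 : ℕ) : ℝ) / n) Filter.atTop (nhds (1 / 2)) := by
    have hlow : Filter.Tendsto (fun n : ℕ => (1 / 2 : ℝ) - 1 / n) Filter.atTop (nhds (1 / 2)) := by
      simpa using (tendsto_const_div_atTop_nhds_zero_nat (1 : ℝ)).const_sub (1 / 2 : ℝ)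
    refine tendsto_of_tendsto_of_tendsto_of_le_of_le' hlow tendsto_const_nhds ?_ ?_
    · filter_upwards [Filter.eventually_gt_atTop 0] with n hn
      have hn' : (0 : ℝ) < n := by exact_mod_cast hn
      rw [le_div_iff₀ hn', sub_mul, one_div_mul_cancel hn'.ne']
      have : (n : ℝ) ≤ 2 * (n / 2 : ℕ) + 1 := by exact_mod_cast (by omega)
      linarith
    · filter_upwards [Filter.eventually_gt_atTop 0] with n hn
      have hn' : (0 : ℝ) < n := by exact_mod_cast hn
      rw [div_le_iff₀ hn']
      have : 2 * ((n / 2 : ℕ) : ℝ) ≤ n := by exact_mod_cast (by omega)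
      linarith
  have hcont : Continuous fun x : ℝ => Real.exp (-(2 * Real.sin (π * x)) * t) := by fun_prop
  have h2 := (hcont.tendsto (1 / 2)).comp h1
  have h3 : Real.sin (π * (1 / 2)) = 1 := by rw [mul_one_div, Real.sin_pi_div_two]
  rw [h3, mul_one] at h2
  refine h2.congr fun n => ?_
  simp only [Function.comp_apply, chord, mul_div_assoc]

theorem euclSeriesTerm_bounds {t : ℝ} (ht : 0 < t) {r : ℕ} (hr : Odd r) :
    0 ≤ euclSeriesTerm t r ∧ euclSeriesTerm t r ≤ π / (2 * (r : ℝ) ^ 2) := by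
  have hr1 : (1 : ℝ) ≤ r := by exact_mod_cast hr.pos
  have hr' : (0 : ℝ) < r := by linarith
  have hpi := Real.pi_pos
  set a := π / (2 * (r : ℝ)) with ha
  have ha0 : 0 < a := by positivity
  have ha2 : a ≤ π / 2 := by
    rw [ha]
    gcongr
    linarith
  have hcos : 0 ≤ Real.cos a :=
    Real.cos_nonneg_of_neg_pi_div_two_le_of_le (by linarith) ha2
  have hsin : 0 ≤ Real.sin a := Real.sin_nonneg_of_nonneg_of_le_pi ha0.le (by linarith)
  have hexp : Real.exp (-2 * t * Real.cos a) ≤ 1 := by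
    rw [Real.exp_le_one_iff]
    nlinarith
  unfold euclSeriesTerm
  rw [← ha]
  refine ⟨by positivity, ?_⟩
  calc 1 / (r : ℝ) * Real.exp (-2 * t * Real.cos a) * Real.sin a ≤ 1 / r * 1 * a := by
        gcongr
        exact Real.sin_le ha0.le
    _ = π / (2 * (r : ℝ) ^ 2) := by
        rw [ha]
        field_simp

theorem summable_const_mul_one_div_sq (c : ℝ) : Summable fun r : ℕ => c * (1 / (r : ℝ) ^ 2) :=
  (Real.summable_one_div_nat_pow.2 one_lt_two).mul_left c

/-- Sums of `cycleTerm t (ν i)` over sets of odd numbers that eventually contain each odd number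
converge to the full series. -/
theorem tendsto_tsum_cycleTerm {t : ℝ} (ht : 0 < t) {ν : ℕ → ℕ}
    (hν : Filter.Tendsto ν Filter.atTop Filter.atTop) (P : ℕ → ℕ → Prop)
    [∀ i r, Decidable (P i r)] (hP : ∀ i r, P i r → Odd r ∧ r < ν i)
    (hP' : ∀ r, Odd r → ∀ᶠ i in Filter.atTop, P i r) :
    Filter.Tendsto (fun i => ∑' r : ℕ, if P i r then cycleTerm t (ν i) r else 0) Filter.atTop
      (nhds (2 * π * t * ∑' r : ℕ, if Odd r then euclSeriesTerm t r else 0)) := by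
  rw [← tsum_mul_left]
  refine tendsto_tsum_of_dominated_convergence
    (summable_const_mul_one_div_sq (t * π ^ 2)) ?_ ?_
  · intro r
    by_cases hr : Odd r
    · rw [if_pos hr]
      refine ((tendsto_cycleTerm t r).comp hν).congr' ?_
      filter_upwards [hP' r hr] with i hi
      simp [hi]
    · have : ∀ i, ¬ P i r := fun i hi => hr (hP i r hi).1
      simp [this, hr]
  · refine Filter.Eventually.of_forall fun i r => ?_
    split_ifs with h
    · obtain ⟨h1, h2⟩ := hP i r h
      have := cycleTerm_bounds ht h1.pos h2.le
      rw [Real.norm_eq_abs, abs_of_nonneg this.1]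
      exact this.2
    · rw [norm_zero]
      positivity

theorem summable_ite_cycleTerm {t : ℝ} {n : ℕ} (P : ℕ → Prop) [DecidablePred P]
    (hP : ∀ r, P r → r < n) : Summable fun r : ℕ => if P r then cycleTerm t n r else 0 := by
  refine summable_of_ne_finset_zero (s := Finset.range n) fun r hr => if_neg fun h => ?_
  exact hr (Finset.mem_range.2 (hP r h))

/-- for every `t > 0`, the series `Σ_{r odd} (1/r) e^{−2t cos(π/(2r))} sin(π/(2r))`
converges absolutely (with `r`-th term bounded by `π/(2r²)`), and
`limsup_{n→∞} |tC_n^eucl|_Rips = e^{−2t} + 2πt Σ_{r odd} (1/r) e^{−2t cos(π/(2r))} sin(π/(2r))`. -/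
theorem ripsMag_euclCycle_limsup (t : ℝ) (ht : 0 < t) :
    Summable (fun r : ℕ => if Odd r then |euclSeriesTerm t r| else 0) ∧
    (∀ r : ℕ, Odd r → euclSeriesTerm t r ≤ π / (2 * (r : ℝ) ^ 2)) ∧
    Filter.limsup (fun n : ℕ => ripsMag (euclCycle n) t) Filter.atTop =
      Real.exp (-2 * t) + 2 * π * t *
        ∑' r : ℕ, (if Odd r then euclSeriesTerm t r else 0) := by
  classical
  refine ⟨?_, fun r hr => (euclSeriesTerm_bounds ht hr).2, ?_⟩
  · refine Summable.of_nonneg_of_le (fun r => ?_) (fun r => ?_)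
      (summable_const_mul_one_div_sq (π / 2))
    · split_ifs <;> positivity
    · split_ifs with hr
      · have h := euclSeriesTerm_bounds ht hr
        rw [abs_of_nonneg h.1]
        exact h.2.trans_eq (by rw [mul_one_div, div_div])
      · positivity
  set L := Real.exp (-2 * t) + 2 * π * t * ∑' r : ℕ, (if Odd r then euclSeriesTerm t r else 0)
    with hL
  have hnonneg : ∀ᶠ n : ℕ in Filter.atTop, 0 ≤ ripsMag (euclCycle n) t := by
    filter_upwards [Filter.eventually_gt_atTop 0] with n hn
    rw [ripsMag_euclCycle_eq_tsum hn]
    refine add_nonneg (Real.exp_pos _).le (tsum_nonneg fun r => ?_)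
    split_ifs with h
    · exact (cycleTerm_bounds ht h.1.pos h.2.1.le).1
    · exact le_rfl
  have hupper : ∃ U : ℕ → ℝ, Filter.Tendsto U Filter.atTop (nhds L) ∧
      ∀ᶠ n : ℕ in Filter.atTop, ripsMag (euclCycle n) t ≤ U n := by
    refine ⟨_, (tendsto_exp_chord_half t).add (tendsto_tsum_cycleTerm ht Filter.tendsto_id
      (fun n r => Odd r ∧ r < n) (fun _ _ h => h) fun r hr => ?_), ?_⟩
    · filter_upwards [Filter.eventually_gt_atTop r] with n hn using ⟨hr, hn⟩
    · filter_upwards [Filter.eventually_gt_atTop 0] with n hn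
      rw [ripsMag_euclCycle_eq_tsum hn]
      refine add_le_add_right (Summable.tsum_le_tsum (fun r => ?_)
        (summable_ite_cycleTerm _ fun r h => h.2.1) (summable_ite_cycleTerm _ fun r h => h.2)) _
      by_cases h : Odd r ∧ r < n
      · rw [if_pos h]
        split_ifs
        · exact le_rfl
        · exact (cycleTerm_bounds ht h.1.pos h.2.le).1
      · rw [if_neg h, if_neg fun h' => h ⟨h'.1, h'.2.1⟩]
  have hfact : Filter.Tendsto Nat.factorial Filter.atTop Filter.atTop :=
    Filter.tendsto_atTop_mono Nat.self_le_factorial Filter.tendsto_id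
  have hlower : Filter.Tendsto (fun i : ℕ => ripsMag (euclCycle i.factorial) t) Filter.atTop
      (nhds L) := by
    refine (((tendsto_exp_chord_half t).comp hfact).add (tendsto_tsum_cycleTerm ht hfact
      (fun i r => Odd r ∧ r < i.factorial ∧ r ∣ i.factorial) (fun _ _ h => ⟨h.1, h.2.1⟩)
      fun r hr => ?_)).congr fun i => (ripsMag_euclCycle_eq_tsum i.factorial_pos t).symm
    filter_upwards [Filter.eventually_gt_atTop r] with i hi
    exact ⟨hr, hi.trans_le i.self_le_factorial, Nat.dvd_factorial hr.pos hi.le⟩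
  obtain ⟨U, hU, hle⟩ := hupper
  have hcobdd : Filter.IsCoboundedUnder (· ≤ ·) Filter.atTop
      fun n : ℕ => ripsMag (euclCycle n) t :=
    Filter.IsBoundedUnder.isCoboundedUnder_le ⟨0, by simpa using hnonneg⟩
  have hbdd : Filter.IsBoundedUnder (· ≤ ·) Filter.atTop
      fun n : ℕ => ripsMag (euclCycle n) t := hU.isBoundedUnder_le.mono_le hle
  apply le_antisymm
  · exact (Filter.limsup_le_limsup hle hcobdd hU.isBoundedUnder_le).trans_eq hU.limsup_eq
  · refine le_of_forall_lt fun b hb => ?_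
    obtain ⟨c, hbc, hcL⟩ := exists_between hb
    refine hbc.trans_le (Filter.le_limsup_of_frequently_le ?_ hbdd)
    exact hfact.frequently ((hlower.eventually (lt_mem_nhds hcL)).frequently.mono
      fun i hi => hi.le)
end

section
/- For every t > 0, the lower limit of the sequence n ↦ |tC_n^geo|_Rips satisfies liminf_{n→∞} |tC_n^geo|_Rips = e^{−πt} + 2πt. -/
open scoped BigOperators Real

open scoped Classical in
/-- The geodesic cycle `C_n^geo`: `n` equally spaced points on the circle
`ℝ/2πℤ` of total arclength `2π`, with the geodesic metric
`d(i,j) = (2π/n)·min(|i−j|, n−|i−j|)`. -/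
noncomputable def geoCycle (n : ℕ) : Finset (AddCircle (2 * π : ℝ)) :=
  (Finset.range n).image (fun k => ((2 * π * k / n : ℝ) : AddCircle (2 * π : ℝ)))

/-- A set of residues whose pairwise cyclic distances are at most `r`. -/
def IsCyclicClique (n r : ℕ) (A : Finset (ZMod n)) : Prop :=
  ∀ x ∈ A, ∀ y ∈ A, (y - x).val ≤ r ∨ n - r ≤ (y - x).val

/-- The elements of `A` from which all of `A` is reached within `2 * r` positive steps. -/
def cyclicLeaders (n r : ℕ) (A : Finset (ZMod n)) : Finset (ZMod n) :=
  A.filter fun x => ∀ y ∈ A, (y - x).val ≤ 2 * r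

section CyclicCliques

variable {n r : ℕ}

lemma mem_cyclicLeaders {A : Finset (ZMod n)} {x : ZMod n} :
    x ∈ cyclicLeaders n r A ↔ x ∈ A ∧ ∀ y ∈ A, (y - x).val ≤ 2 * r := by
  simp [cyclicLeaders]

lemma zmod_val_sub_eq_ite [NeZero n] (a b : ZMod n) :
    (a - b).val = if b.val ≤ a.val then a.val - b.val else a.val + n - b.val := by
  split_ifs with h
  · exact ZMod.val_sub h
  · have ha := a.val_lt
    have hb := b.val_lt
    have h1 : (a - b).val = a.val + n - b.val := by
      have h2 : a - b = ((a.val + n - b.val : ℕ) : ZMod n) := by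
        rw [Nat.cast_sub (by omega)]
        simp
      rw [h2, ZMod.val_natCast, Nat.mod_eq_of_lt (by omega)]
    exact h1

lemma IsCyclicClique.mono {A B : Finset (ZMod n)} (hA : IsCyclicClique n r A) (h : B ⊆ A) :
    IsCyclicClique n r B := fun x hx y hy => hA x (h hx) y (h hy)

lemma IsCyclicClique.insert_add [NeZero n] (hn : 2 * r < n) {A : Finset (ZMod n)}
    (hA : IsCyclicClique n r A) {x : ZMod n} (hx : x ∈ cyclicLeaders n r A) :
    IsCyclicClique n r (insert (x + (r : ZMod n)) A) := by
  obtain ⟨hxA, hl⟩ := mem_cyclicLeaders.1 hx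
  have hr : ((r : ZMod n)).val = r := ZMod.val_cast_of_lt (by omega)
  have key : ∀ z ∈ A, (z - (x + r)).val ≤ r ∨ n - r ≤ (z - (x + r)).val := by
    intro z hz
    have h1 := hA x hxA z hz
    have h2 := hl z hz
    have h3 := (z - x).val_lt
    have h4 := zmod_val_sub_eq_ite (z - x) (r : ZMod n)
    rw [hr, sub_sub] at h4
    split_ifs at h4 <;> omega
  have key' : ∀ z ∈ A, (x + r - z).val ≤ r ∨ n - r ≤ (x + r - z).val := by
    intro z hz
    have h1 := key z hz
    have h2 := zmod_val_sub_eq_ite 0 (z - (x + (r : ZMod n)))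
    rw [zero_sub, neg_sub, ZMod.val_zero] at h2
    split_ifs at h2 <;> omega
  intro a ha b hb
  rcases Finset.mem_insert.1 ha with rfl | ha <;> rcases Finset.mem_insert.1 hb with rfl | hb
  · simp
  · exact key b hb
  · exact key' a ha
  · exact hA a ha b hb

lemma IsCyclicClique.cyclicLeaders_subset_insert_add [NeZero n] (hn : 2 * r < n)
    {A : Finset (ZMod n)} (hA : IsCyclicClique n r A) {x : ZMod n}
    (hx : x ∈ cyclicLeaders n r A) :
    cyclicLeaders n r A ⊆ cyclicLeaders n r (insert (x + (r : ZMod n)) A) := by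
  intro y hy
  obtain ⟨hxA, -⟩ := mem_cyclicLeaders.1 hx
  obtain ⟨hyA, hly⟩ := mem_cyclicLeaders.1 hy
  have hr : ((r : ZMod n)).val = r := ZMod.val_cast_of_lt (by omega)
  refine mem_cyclicLeaders.2 ⟨Finset.mem_insert_of_mem hyA, fun z hz => ?_⟩
  rcases Finset.mem_insert.1 hz with rfl | hz
  · have h1 := hA x hxA y hyA
    have h2 := zmod_val_sub_eq_ite (r : ZMod n) (y - x)
    have h3 := (y - x).val_lt
    rw [hr, show (r : ZMod n) - (y - x) = x + r - y by ring] at h2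
    split_ifs at h2 <;> omega
  · exact hly z hz

lemma IsCyclicClique.cyclicLeaders_nonempty [NeZero n] (hn : 2 * r < n) {A : Finset (ZMod n)}
    (hA : IsCyclicClique n r A) (hne : A.Nonempty) : (cyclicLeaders n r A).Nonempty := by
  obtain ⟨a, ha⟩ := hne
  by_cases h : (A.filter fun y => n - r ≤ (y - a).val).Nonempty
  · obtain ⟨y, hy, hmin⟩ := Finset.exists_min_image _ (fun y => (y - a).val) h
    rw [Finset.mem_filter] at hy
    refine ⟨y, mem_cyclicLeaders.2 ⟨hy.1, fun z hz => ?_⟩⟩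
    have h1 := hA a ha z hz
    have h2 : n - r ≤ (z - a).val → (y - a).val ≤ (z - a).val := fun h =>
      hmin z (Finset.mem_filter.2 ⟨hz, h⟩)
    have h3 := zmod_val_sub_eq_ite (z - a) (y - a)
    have h4 := (y - a).val_lt
    have h5 := (z - a).val_lt
    rw [sub_sub_sub_cancel_right] at h3
    split_ifs at h3 <;> omega
  · refine ⟨a, mem_cyclicLeaders.2 ⟨ha, fun z hz => ?_⟩⟩
    have h1 := hA a ha z hz
    have h2 : ¬ n - r ≤ (z - a).val := fun h' => h ⟨z, Finset.mem_filter.2 ⟨hz, h'⟩⟩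
    omega

/-- A nonempty set of leaders that is stable under translation by `r` is the whole set. -/
lemma subset_of_subset_cyclicLeaders [NeZero n] (hn : 2 * r < n) {A S : Finset (ZMod n)}
    (hS : S.Nonempty) (hclosed : ∀ x ∈ S, x + r ∈ S) (hSA : S ⊆ cyclicLeaders n r A) : A ⊆ S := by
  intro y hy
  obtain ⟨x, hx, hmax⟩ := Finset.exists_max_image S (fun x => (y - x).val) hS
  have h2r : (((2 * r : ℕ) : ZMod n)).val = 2 * r := ZMod.val_cast_of_lt hn
  have hx' : x + (2 * r : ℕ) ∈ S := by
    have := hclosed _ (hclosed x hx)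
    rwa [add_assoc, ← Nat.cast_add, ← two_mul] at this
  have h1 := (mem_cyclicLeaders.1 (hSA hx)).2 y hy
  have h2 := hmax _ hx'
  have h3 := zmod_val_sub_eq_ite (y - x) ((2 * r : ℕ) : ZMod n)
  rw [sub_sub, h2r] at h3
  have h4 : (y - x).val = 2 * r := by
    split_ifs at h3 <;> omega
  have h5 : y - x = ((2 * r : ℕ) : ZMod n) := by
    rw [← h4, ZMod.natCast_zmod_val]
  rw [← sub_add_cancel y x, h5, add_comm]
  exact hx'

open scoped Classical in
/-- The Euler characteristic of the clique complex of the `r`-th power of the `n`-cycle. -/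
noncomputable def cyclicEuler (n r : ℕ) [NeZero n] : ℝ :=
  ∑ A : Finset (ZMod n), if A.Nonempty ∧ IsCyclicClique n r A then (-1 : ℝ) ^ (A.card - 1) else 0

open scoped Classical in
/-- The signed count of the cliques all of whose elements in `S` are leaders. -/
noncomputable def signedCliqueCount (n r : ℕ) [NeZero n] (S : Finset (ZMod n)) : ℝ :=
  ∑ A : Finset (ZMod n) with IsCyclicClique n r A ∧ S ⊆ cyclicLeaders n r A, (-1 : ℝ) ^ A.card

lemma signedCliqueCount_eq_zero [NeZero n] (hn : 2 * r < n) {S : Finset (ZMod n)}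
    {x : ZMod n} (hx : x ∈ S) (hxr : x + (r : ZMod n) ∉ S) : signedCliqueCount n r S = 0 := by
  classical
  unfold signedCliqueCount
  refine Finset.sum_involution
    (fun A _ => if x + r ∈ A then A.erase (x + r) else insert (x + r) A) ?_ ?_ ?_ ?_
  · intro A _
    split_ifs with h
    · rw [← Finset.card_erase_add_one h]
      ring
    · rw [Finset.card_insert_of_notMem h]
      ring
  · intro A _ _
    split_ifs with h
    · intro h'
      rw [← h'] at h
      simp at h
    · intro h'
      exact h (h' ▸ Finset.mem_insert_self _ _)
  · intro A hA
    simp only [Finset.mem_filter, Finset.mem_univ, true_and] at hA ⊢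
    obtain ⟨hA, hS⟩ := hA
    split_ifs with h
    · refine ⟨hA.mono (Finset.erase_subset _ _), fun y hy => ?_⟩
      obtain ⟨h1, h2⟩ := mem_cyclicLeaders.1 (hS hy)
      refine mem_cyclicLeaders.2 ⟨Finset.mem_erase.2 ⟨?_, h1⟩, fun z hz =>
        h2 z (Finset.mem_of_mem_erase hz)⟩
      rintro rfl
      exact hxr hy
    · exact ⟨hA.insert_add hn (hS hx), hS.trans (hA.cyclicLeaders_subset_insert_add hn (hS hx))⟩
  · intro A _
    by_cases h : x + (r : ZMod n) ∈ A
    · simp [h]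
    · simp [h]

lemma signedCliqueCount_of_closed [NeZero n] (hn : 2 * r < n) {S : Finset (ZMod n)}
    (hS : S.Nonempty) (hclosed : ∀ x ∈ S, x + r ∈ S) :
    signedCliqueCount n r S = 0 ∨
      (IsCyclicClique n r S ∧ signedCliqueCount n r S = (-1) ^ S.card) := by
  classical
  have hsub : ∀ A : Finset (ZMod n), S ⊆ cyclicLeaders n r A → A = S := fun A hA =>
    (subset_of_subset_cyclicLeaders hn hS hclosed hA).antisymm
      fun _ hx => (mem_cyclicLeaders.1 (hA hx)).1
  unfold signedCliqueCount
  by_cases h : IsCyclicClique n r S ∧ S ⊆ cyclicLeaders n r S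
  · right
    refine ⟨h.1, ?_⟩
    have : (Finset.univ.filter fun A : Finset (ZMod n) =>
        IsCyclicClique n r A ∧ S ⊆ cyclicLeaders n r A) = {S} := by
      ext A
      simp only [Finset.mem_filter, Finset.mem_univ, true_and, Finset.mem_singleton]
      exact ⟨fun hA => hsub A hA.2, fun hA => hA ▸ h⟩
    rw [this, Finset.sum_singleton]
  · left
    refine Finset.sum_eq_zero fun A hA => ?_
    simp only [Finset.mem_filter, Finset.mem_univ, true_and] at hA
    obtain rfl := hsub A hA.2
    exact absurd hA h

lemma cyclicEuler_eq_sum [NeZero n] (hn : 2 * r < n) :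
    cyclicEuler n r =
      ∑ S : Finset (ZMod n) with S.Nonempty, (-1 : ℝ) ^ S.card * signedCliqueCount n r S := by
  classical
  have h1 : ∑ S : Finset (ZMod n), (-1 : ℝ) ^ S.card * signedCliqueCount n r S = 1 := by
    simp only [signedCliqueCount, Finset.sum_filter, Finset.mul_sum, mul_ite, mul_zero]
    rw [Finset.sum_comm]
    have hA : ∀ A : Finset (ZMod n), (∑ S : Finset (ZMod n),
        if IsCyclicClique n r A ∧ S ⊆ cyclicLeaders n r A then
          (-1 : ℝ) ^ S.card * (-1) ^ A.card else 0) = if A = ∅ then 1 else 0 := by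
      intro A
      by_cases hcl : IsCyclicClique n r A
      · simp only [hcl, true_and]
        rw [← Finset.sum_filter, ← Finset.sum_mul]
        have : (Finset.univ.filter fun S => S ⊆ cyclicLeaders n r A) =
            (cyclicLeaders n r A).powerset := by
          ext S
          simp
        rw [this]
        split_ifs with hA
        · subst hA
          simp [cyclicLeaders]
        · have := Finset.sum_powerset_neg_one_pow_card_of_nonempty
            (hcl.cyclicLeaders_nonempty hn (Finset.nonempty_iff_ne_empty.2 hA))
          have h' : ∑ S ∈ (cyclicLeaders n r A).powerset, (-1 : ℝ) ^ S.card = 0 := by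
            exact_mod_cast this
          rw [h', zero_mul]
      · have : A ≠ ∅ := by
          rintro rfl
          exact hcl (by simp [IsCyclicClique])
        simp [hcl, this]
    rw [Finset.sum_congr rfl fun A _ => hA A]
    simp
  have h2 : signedCliqueCount n r ∅ = 1 - cyclicEuler n r := by
    have : ∀ A : Finset (ZMod n), (if IsCyclicClique n r A then (-1 : ℝ) ^ A.card else 0) =
        (if A = ∅ then 1 else 0) -
          if A.Nonempty ∧ IsCyclicClique n r A then (-1 : ℝ) ^ (A.card - 1) else 0 := by
      intro A
      rcases A.eq_empty_or_nonempty with rfl | hne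
      · simp [IsCyclicClique]
      · have hc := hne.card_pos
        obtain ⟨k, hk⟩ : ∃ k, A.card = k + 1 := ⟨A.card - 1, by omega⟩
        by_cases hcl : IsCyclicClique n r A <;> simp [hne, hne.ne_empty, hcl, hk, pow_succ]
    simp only [signedCliqueCount, cyclicEuler, Finset.empty_subset, and_true, Finset.sum_filter]
    rw [Finset.sum_congr rfl fun A _ => this A, Finset.sum_sub_distrib]
    simp
  have h3 : ∑ S : Finset (ZMod n) with ¬ S.Nonempty,
      (-1 : ℝ) ^ S.card * signedCliqueCount n r S = 1 - cyclicEuler n r := by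
    have : (Finset.univ.filter fun S : Finset (ZMod n) => ¬ S.Nonempty) = {∅} := by
      ext S
      simp
    rw [this, Finset.sum_singleton, h2]
    simp
  have h4 := Finset.sum_filter_add_sum_filter_not Finset.univ
    (fun S : Finset (ZMod n) => S.Nonempty)
    (fun S => (-1 : ℝ) ^ S.card * signedCliqueCount n r S)
  linarith

lemma cyclicEuler_nonneg [NeZero n] (hn : 2 * r < n) : 0 ≤ cyclicEuler n r := by
  rw [cyclicEuler_eq_sum hn]
  refine Finset.sum_nonneg fun S hS => ?_
  rw [Finset.mem_filter] at hS
  by_cases hclosed : ∀ x ∈ S, x + r ∈ S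
  · rcases signedCliqueCount_of_closed hn hS.2 hclosed with h | ⟨-, h⟩
    · simp [h]
    · rw [h, ← mul_pow]
      simp
  · push Not at hclosed
    obtain ⟨x, hx, hxr⟩ := hclosed
    simp [signedCliqueCount_eq_zero hn hx hxr]

lemma cyclicEuler_eq_zero_of_prime [NeZero n] (hp : n.Prime) (hr : 0 < r) (hn : 2 * r + 1 < n) :
    cyclicEuler n r = 0 := by
  have := Fact.mk hp
  rw [cyclicEuler_eq_sum (by omega)]
  refine Finset.sum_eq_zero fun S hS => ?_
  rw [Finset.mem_filter] at hS
  by_cases hclosed : ∀ x ∈ S, x + r ∈ S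
  · rcases signedCliqueCount_of_closed (by omega) hS.2 hclosed with h | ⟨hcl, -⟩
    · simp [h]
    · exfalso
      obtain ⟨x, hx⟩ := hS.2
      have hmul : ∀ k : ℕ, x + k * r ∈ S := by
        intro k
        induction k with
        | zero => simpa using hx
        | succ k ih =>
          have := hclosed _ ih
          rwa [show x + (k : ZMod n) * r + r = x + ((k + 1 : ℕ) : ZMod n) * r by
            push_cast; ring] at this
      have hr0 : (r : ZMod n) ≠ 0 := by
        rw [Ne, ZMod.natCast_eq_zero_iff]
        exact fun h => absurd (Nat.le_of_dvd hr h) (by omega)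
      have h1 := hmul (((r + 1 : ℕ) : ZMod n) * (r : ZMod n)⁻¹).val
      rw [ZMod.natCast_zmod_val, mul_assoc, inv_mul_cancel₀ hr0, mul_one] at h1
      have h2 := hcl x hx _ h1
      rw [add_sub_cancel_left, ZMod.val_cast_of_lt (by omega)] at h2
      omega
  · push Not at hclosed
    obtain ⟨x, hx, hxr⟩ := hclosed
    simp [signedCliqueCount_eq_zero (by omega) hx hxr]

lemma cyclicEuler_zero [NeZero n] : cyclicEuler n 0 = n := by
  classical
  have h : (Finset.univ.filter fun A : Finset (ZMod n) => A.Nonempty ∧ IsCyclicClique n 0 A) =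
      Finset.univ.image fun x : ZMod n => ({x} : Finset (ZMod n)) := by
    ext A
    simp only [Finset.mem_filter, Finset.mem_univ, true_and, Finset.mem_image]
    constructor
    · rintro ⟨⟨x, hx⟩, hA⟩
      refine ⟨x, (Finset.eq_singleton_iff_unique_mem.2 ⟨hx, fun y hy => ?_⟩).symm⟩
      have h1 := hA x hx y hy
      have h2 := (y - x).val_lt
      have h3 : (y - x).val = 0 := by omega
      exact sub_eq_zero.1 ((ZMod.val_eq_zero _).1 h3)
    · rintro ⟨x, rfl⟩
      simp [IsCyclicClique]
  rw [cyclicEuler, ← Finset.sum_filter, h,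
    Finset.sum_image (fun x _ y _ hxy => Finset.singleton_injective hxy)]
  simp [ZMod.card]

lemma cyclicEuler_half [NeZero n] : cyclicEuler n (n / 2) = 1 := by
  classical
  have h0 : ∀ A : Finset (ZMod n), IsCyclicClique n (n / 2) A := fun A x _ y _ => by omega
  have h1 := Finset.sum_powerset_neg_one_pow_card_of_nonempty
    (Finset.univ_nonempty (α := ZMod n))
  have h2 : ∑ A : Finset (ZMod n), (-1 : ℝ) ^ A.card = 0 := by
    rw [Finset.powerset_univ] at h1
    exact_mod_cast h1
  have h3 : ∀ A : Finset (ZMod n),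
      (if A.Nonempty ∧ IsCyclicClique n (n / 2) A then (-1 : ℝ) ^ (A.card - 1) else 0) =
        (if A = ∅ then 1 else 0) - (-1 : ℝ) ^ A.card := by
    intro A
    rcases A.eq_empty_or_nonempty with rfl | hne
    · simp
    · have hc := hne.card_pos
      obtain ⟨k, hk⟩ : ∃ k, A.card = k + 1 := ⟨A.card - 1, by omega⟩
      simp [hne, hne.ne_empty, h0, hk, pow_succ]
  rw [cyclicEuler, Finset.sum_congr rfl fun A _ => h3 A, Finset.sum_sub_distrib, h2]
  simp

end CyclicCliques

/-- The largest cyclic distance between two elements of `A`. -/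
def cyclicDiam (n : ℕ) (A : Finset (ZMod n)) : ℕ :=
  A.sup fun x => A.sup fun y => min (y - x).val (n - (y - x).val)

lemma cyclicDiam_le_iff {n r : ℕ} {A : Finset (ZMod n)} :
    cyclicDiam n A ≤ r ↔ IsCyclicClique n r A := by
  simp only [cyclicDiam, Finset.sup_le_iff, IsCyclicClique, min_le_iff]
  refine forall₄_congr fun x _ y _ => ?_
  omega

lemma cyclicDiam_le_half {n : ℕ} (A : Finset (ZMod n)) : cyclicDiam n A ≤ n / 2 :=
  cyclicDiam_le_iff.2 fun _ _ _ _ => by omega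

/-- The standard embedding of `ZMod n` in the circle of length `2 * π`. -/
noncomputable def cyclePoint (n : ℕ) (x : ZMod n) : AddCircle (2 * π : ℝ) :=
  ((2 * π * x.val / n : ℝ) : AddCircle (2 * π : ℝ))

section CyclePoint

variable {n : ℕ} [NeZero n]

lemma dist_cyclePoint (x y : ZMod n) :
    dist (cyclePoint n x) (cyclePoint n y) =
      2 * π / n * (min (y - x).val (n - (y - x).val) : ℕ) := by
  have hn : (n : ℝ) ≠ 0 := Nat.cast_ne_zero.2 (NeZero.ne n)
  have : Fact (0 < 2 * π) := ⟨Real.two_pi_pos⟩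
  have h1 : cyclePoint n y - cyclePoint n x =
      (((((y - x).val : ℕ) : ℝ) / n * (2 * π) : ℝ) : AddCircle (2 * π : ℝ)) := by
    unfold cyclePoint
    rw [zmod_val_sub_eq_ite, ← AddCircle.coe_sub]
    split_ifs with h
    · rw [Nat.cast_sub h]
      congr 1
      field_simp
    · rw [Nat.cast_sub (by have := x.val_lt; omega), Nat.cast_add,
        ← AddCircle.coe_add_period (2 * π) (_ - _)]
      congr 1
      field_simp
      ring
  rw [dist_comm, dist_eq_norm, h1, AddCircle.norm_div_natCast, Nat.mod_eq_of_lt (y - x).val_lt]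
  ring

lemma cyclePoint_injective : Function.Injective (cyclePoint n) := by
  intro x y h
  have h1 := dist_cyclePoint x y
  rw [h, dist_self] at h1
  have hn : 0 < (n : ℝ) := Nat.cast_pos.2 (NeZero.pos n)
  have h2 : ((min (y - x).val (n - (y - x).val) : ℕ) : ℝ) = 0 := by
    rcases mul_eq_zero.1 h1.symm with h3 | h3
    · exact absurd h3 (by positivity)
    · exact h3
  have h3 := Nat.cast_eq_zero.1 h2
  have h4 := (y - x).val_lt
  have h5 : (y - x).val = 0 := by omega
  exact (sub_eq_zero.1 ((ZMod.val_eq_zero _).1 h5)).symm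

lemma geoCycle_eq_map :
    geoCycle n = Finset.univ.map ⟨cyclePoint n, cyclePoint_injective⟩ := by
  classical
  ext p
  simp only [geoCycle, Finset.mem_image, Finset.bind_def, Finset.pure_def, Finset.mem_sup,
    Finset.mem_singleton, Finset.mem_range, Finset.mem_map, Finset.mem_univ, true_and,
    Function.Embedding.coeFn_mk]
  constructor
  · rintro ⟨_, ⟨k, hk, rfl⟩, rfl⟩
    exact ⟨(k : ZMod n), by rw [cyclePoint, ZMod.val_cast_of_lt hk]⟩
  · rintro ⟨x, rfl⟩
    exact ⟨x.val, ⟨x.val, x.val_lt, rfl⟩, rfl⟩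

lemma diam_image_cyclePoint (A : Finset (ZMod n)) :
    Metric.diam (cyclePoint n '' (A : Set (ZMod n))) = 2 * π / n * cyclicDiam n A := by
  have hc : 0 ≤ 2 * π / (n : ℝ) := by positivity
  refine le_antisymm (Metric.diam_le_of_forall_dist_le (by positivity) ?_) ?_
  · rintro _ ⟨x, hx, rfl⟩ _ ⟨y, hy, rfl⟩
    rw [dist_cyclePoint]
    have h : min (y - x).val (n - (y - x).val) ≤ cyclicDiam n A :=
      (Finset.le_sup (f := fun y => min (y - x).val (n - (y - x).val)) hy).trans
        (Finset.le_sup (f := fun x => A.sup fun y => min (y - x).val (n - (y - x).val)) hx)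
    gcongr
  · rcases A.eq_empty_or_nonempty with rfl | hne
    · simp [cyclicDiam]
    · obtain ⟨x, hx, h1⟩ := Finset.exists_mem_eq_sup A hne
        fun x => A.sup fun y => min (y - x).val (n - (y - x).val)
      obtain ⟨y, hy, h2⟩ := Finset.exists_mem_eq_sup A hne
        fun y => min (y - x).val (n - (y - x).val)
      rw [cyclicDiam, h1, h2, ← dist_cyclePoint]
      exact Metric.dist_le_diam_of_mem ((A.finite_toSet.image _).isBounded)
        (Set.mem_image_of_mem _ hx) (Set.mem_image_of_mem _ hy)

lemma ripsMag_geoCycle_eq_sum_cyclicDiam (t : ℝ) :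
    ripsMag (geoCycle n) t = ∑ A : Finset (ZMod n) with A.Nonempty,
      (-1 : ℝ) ^ (A.card - 1) * Real.exp (-(2 * π * t / n) * cyclicDiam n A) := by
  rw [ripsMag, geoCycle_eq_map]
  symm
  refine Finset.sum_bij (fun A _ => A.map ⟨cyclePoint n, cyclePoint_injective⟩) ?_ ?_ ?_ ?_
  · intro A hA
    rw [Finset.mem_filter] at hA ⊢
    exact ⟨Finset.mem_powerset.2 (Finset.map_subset_map.2 (Finset.subset_univ A)),
      hA.2.map⟩
  · intro A _ B _ h
    exact Finset.map_injective _ h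
  · intro B hB
    rw [Finset.mem_filter, Finset.mem_powerset, Finset.subset_map_iff] at hB
    obtain ⟨⟨A, -, rfl⟩, hne⟩ := hB
    exact ⟨A, by simpa using hne, rfl⟩
  · intro A _
    rw [Finset.card_map, Finset.coe_map, Function.Embedding.coeFn_mk, diam_image_cyclePoint]
    congr 2
    ring

end CyclePoint

lemma eq_add_sum_range_ite_sub (f : ℕ → ℝ) {d D : ℕ} (h : d ≤ D) :
    f d = f D + ∑ r ∈ Finset.range D, if d ≤ r then f r - f (r + 1) else 0 := by
  induction D, h using Nat.le_induction with
  | base =>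
    rw [Finset.sum_eq_zero, add_zero]
    intro r hr
    rw [if_neg (by simpa using hr)]
  | succ D hD ih =>
    rw [Finset.sum_range_succ, if_pos hD]
    linarith

lemma ripsMag_geoCycle_eq_sum_cyclicEuler {n : ℕ} [NeZero n] (t : ℝ) :
    ripsMag (geoCycle n) t = Real.exp (-(2 * π * t / n) * (n / 2 : ℕ)) +
      ∑ r ∈ Finset.range (n / 2), (Real.exp (-(2 * π * t / n) * r) -
        Real.exp (-(2 * π * t / n) * (r + 1 : ℕ))) * cyclicEuler n r := by
  classical
  set f : ℕ → ℝ := fun r => Real.exp (-(2 * π * t / n) * r) with hf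
  have hsum : ∀ r, cyclicEuler n r = ∑ A : Finset (ZMod n) with A.Nonempty,
      if cyclicDiam n A ≤ r then (-1 : ℝ) ^ (A.card - 1) else 0 := by
    intro r
    rw [cyclicEuler, Finset.sum_filter]
    refine Finset.sum_congr rfl fun A _ => ?_
    simp only [cyclicDiam_le_iff, ite_and]
  have h1 : ripsMag (geoCycle n) t = f (n / 2) * cyclicEuler n (n / 2) +
      ∑ r ∈ Finset.range (n / 2), (f r - f (r + 1)) * cyclicEuler n r := by
    rw [ripsMag_geoCycle_eq_sum_cyclicDiam]
    simp only [hsum, Finset.mul_sum]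
    rw [Finset.sum_comm, ← Finset.sum_add_distrib]
    refine Finset.sum_congr rfl fun A _ => ?_
    change (-1 : ℝ) ^ (A.card - 1) * f (cyclicDiam n A) = _
    rw [eq_add_sum_range_ite_sub f (cyclicDiam_le_half A), if_pos (cyclicDiam_le_half A), mul_add,
      Finset.mul_sum, mul_comm]
    congr 1
    refine Finset.sum_congr rfl fun r _ => ?_
    split_ifs <;> ring
  rw [h1, cyclicEuler_half, mul_one]

/-- The contribution of the singletons and of the full simplex to `ripsMag (geoCycle n) t`. -/
noncomputable def geoCycleMain (t : ℝ) (n : ℕ) : ℝ :=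
  Real.exp (-(2 * π * t / n) * (n / 2 : ℕ)) + n * (1 - Real.exp (-(2 * π * t / n)))

lemma ripsMag_geoCycle_eq_geoCycleMain_add {n : ℕ} [NeZero n] (hn : 2 ≤ n) (t : ℝ) :
    ripsMag (geoCycle n) t = geoCycleMain t n +
      ∑ r ∈ Finset.Ico 1 (n / 2), (Real.exp (-(2 * π * t / n) * r) -
        Real.exp (-(2 * π * t / n) * (r + 1 : ℕ))) * cyclicEuler n r := by
  rw [ripsMag_geoCycle_eq_sum_cyclicEuler, Finset.range_eq_Ico,
    Finset.sum_eq_sum_Ico_succ_bot (by omega), cyclicEuler_zero, geoCycleMain]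
  simp only [Nat.cast_zero, mul_zero, Real.exp_zero, zero_add, Nat.cast_one, mul_one]
  ring

lemma geoCycleMain_le_ripsMag {n : ℕ} (hn : 2 ≤ n) {t : ℝ} (ht : 0 ≤ t) :
    geoCycleMain t n ≤ ripsMag (geoCycle n) t := by
  have : NeZero n := ⟨by omega⟩
  rw [ripsMag_geoCycle_eq_geoCycleMain_add hn]
  refine le_add_of_nonneg_right (Finset.sum_nonneg fun r hr => mul_nonneg ?_ ?_)
  · have hc : 0 ≤ 2 * π * t / (n : ℝ) := by positivity
    rw [sub_nonneg, Real.exp_le_exp, Nat.cast_add, Nat.cast_one]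
    nlinarith
  · rw [Finset.mem_Ico] at hr
    exact cyclicEuler_nonneg (by omega)

lemma ripsMag_geoCycle_eq_geoCycleMain_of_prime {n : ℕ} (hn : n.Prime) (t : ℝ) :
    ripsMag (geoCycle n) t = geoCycleMain t n := by
  have : NeZero n := ⟨hn.ne_zero⟩
  rw [ripsMag_geoCycle_eq_geoCycleMain_add hn.two_le, Finset.sum_eq_zero, add_zero]
  intro r hr
  rw [Finset.mem_Ico] at hr
  rcases hn.eq_two_or_odd with rfl | hodd
  · omega
  · rw [cyclicEuler_eq_zero_of_prime hn (by omega) (by omega), mul_zero]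

open Filter Topology in
lemma tendsto_geoCycleMain (t : ℝ) :
    Tendsto (geoCycleMain t) atTop (𝓝 (Real.exp (-π * t) + 2 * π * t)) := by
  have hlin : Tendsto (fun n : ℕ => (n : ℝ) * (1 - Real.exp (-(2 * π * t / n)))) atTop
      (𝓝 (2 * π * t)) := by
    have hd : HasDerivAt (fun x : ℝ => 1 - Real.exp (-(2 * π * t * x))) (2 * π * t) 0 := by
      have := (((hasDerivAt_id (0 : ℝ)).const_mul (2 * π * t)).neg.exp).const_sub 1
      simpa using this
    have hs := hd.tendsto_slope_zero_right.comp tendsto_inv_atTop_nhdsGT_zero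
    refine (hs.comp tendsto_natCast_atTop_atTop).congr fun n => ?_
    simp [div_eq_mul_inv]
  have hexp : Tendsto (fun n : ℕ => Real.exp (-(2 * π * t / n) * (n / 2 : ℕ))) atTop
      (𝓝 (Real.exp (-π * t))) := by
    refine (Real.continuous_exp.tendsto _).comp ?_
    have hfloor : Tendsto (fun n : ℕ => ((n / 2 : ℕ) : ℝ) / n) atTop (𝓝 (1 / 2)) := by
      have := (tendsto_nat_floor_mul_div_atTop (R := ℝ) (a := 1 / 2) (by norm_num)).comp
        tendsto_natCast_atTop_atTop
      refine this.congr fun n => ?_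
      rw [Function.comp_apply, show (1 / 2 * n : ℝ) = (n : ℝ) / (2 : ℕ) by push_cast; ring,
        Nat.floor_div_natCast, Nat.floor_natCast]
    have := hfloor.const_mul (-(2 * π * t))
    rw [show -(2 * π * t) * (1 / 2) = -π * t by ring] at this
    exact this.congr fun n => by ring
  exact hexp.add hlin

/-- for every `t > 0`,
`liminf_{n→∞} |tC_n^geo|_Rips = e^{−πt} + 2πt`. -/
theorem ripsMag_geoCycle_liminf (t : ℝ) (ht : 0 < t) :
    Filter.liminf (fun n : ℕ => ripsMag (geoCycle n) t) Filter.atTop =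
      Real.exp (-π * t) + 2 * π * t := by
  have hlim := tendsto_geoCycleMain t
  have hle : ∀ᶠ n : ℕ in Filter.atTop, geoCycleMain t n ≤ ripsMag (geoCycle n) t :=
    (Filter.eventually_ge_atTop 2).mono fun n hn => geoCycleMain_le_ripsMag hn ht.le
  have hprime : ∃ᶠ n : ℕ in Filter.atTop, n.Prime :=
    Nat.frequently_atTop_iff_infinite.2 Nat.infinite_setOfPred_prime
  have hupper : ∀ a, Real.exp (-π * t) + 2 * π * t < a →
      ∃ᶠ n : ℕ in Filter.atTop, ripsMag (geoCycle n) t ≤ a := fun a ha =>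
    (hprime.and_eventually (hlim.eventually_le_const ha)).mono fun n hn =>
      (ripsMag_geoCycle_eq_geoCycleMain_of_prime hn.1 t).trans_le hn.2
  have hlower : ∀ a, a < Real.exp (-π * t) + 2 * π * t →
      ∀ᶠ n : ℕ in Filter.atTop, a ≤ ripsMag (geoCycle n) t := fun a ha =>
    ((hlim.eventually_const_le ha).and hle).mono fun n hn => hn.1.trans hn.2
  refine le_antisymm (le_of_forall_gt_imp_ge_of_dense fun a ha => ?_)
    (le_of_forall_lt_imp_le_of_dense fun a ha => ?_)
  · exact Filter.liminf_le_of_frequently_le (hupper a ha)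
      ⟨_, Filter.eventually_map.2 (hlower _ (sub_one_lt _))⟩
  · exact Filter.le_liminf_of_le
      (Filter.IsCoboundedUnder.of_frequently_le (hupper _ (lt_add_one _))) (hlower a ha)
end
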